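/- arXiv:2011.03434 — 8 statements merged into one kernel-verified Lean document; each statement's English description precedes it below -/
import Mathlib

section
/- Let S be a stable matching in G* with level partitions A = A_0 ∪ ⋯ ∪ A_{n0−1} and B = B_0 ∪ ⋯ ∪ B_{n0−1}. Then S' ⊆ ∪_{i=0}^{n0−1} (A_i × B_i), and for every i no edge of E with both endpoints in A_i ∪ B_i blocks S' (i.e., S' restricted to each set A_i ∪ B_i is stable). -/
open Classical

noncomputable section

namespace PopMax

/-- A bipartite preference instance `G = (A ∪ B, E)`:
`E a b` says there is an edge between `a ∈ A` and `b ∈ B`;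
`prefA a b b'` says `a` strictly prefers `b` to `b'`;
`prefB b a a'` says `b` strictly prefers `a` to `a'`. -/
structure PrefSys (A : Type*) (B : Type*) where
  E : A → B → Prop
  prefA : A → B → B → Prop
  prefB : B → A → A → Prop

/-- Every node has a strict (linear) preference order over its neighbors. -/
def PrefSys.IsValid {A B : Type*} (I : PrefSys A B) : Prop :=
  (∀ a b, ¬ I.prefA a b b) ∧
  (∀ a b₁ b₂ b₃, I.prefA a b₁ b₂ → I.prefA a b₂ b₃ → I.prefA a b₁ b₃) ∧
  (∀ a b₁ b₂, I.E a b₁ → I.E a b₂ → b₁ ≠ b₂ → I.prefA a b₁ b₂ ∨ I.prefA a b₂ b₁) ∧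
  (∀ b a, ¬ I.prefB b a a) ∧
  (∀ b a₁ a₂ a₃, I.prefB b a₁ a₂ → I.prefB b a₂ a₃ → I.prefB b a₁ a₃) ∧
  (∀ b a₁ a₂, I.E a₁ b → I.E a₂ b → a₁ ≠ a₂ → I.prefB b a₁ a₂ ∨ I.prefB b a₂ a₁)

variable {A B : Type*}

/-- A matching: a set of pairwise disjoint edges. -/
def IsMatching (I : PrefSys A B) (M : Finset (A × B)) : Prop :=
  (∀ p ∈ M, I.E p.1 p.2) ∧
  (∀ p ∈ M, ∀ q ∈ M, p.1 = q.1 → p = q) ∧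
  (∀ p ∈ M, ∀ q ∈ M, p.2 = q.2 → p = q)

def matchedA (M : Finset (A × B)) (a : A) : Prop := ∃ b, (a, b) ∈ M
def matchedB (M : Finset (A × B)) (b : B) : Prop := ∃ a, (a, b) ∈ M

/-- A maximum matching: a matching of maximum cardinality. -/
def IsMaximumMatching (I : PrefSys A B) (M : Finset (A × B)) : Prop :=
  IsMatching I M ∧ ∀ N : Finset (A × B), IsMatching I N → N.card ≤ M.card

/-- A perfect matching matches all nodes. -/
def IsPerfectMatching (I : PrefSys A B) (M : Finset (A × B)) : Prop :=
  IsMatching I M ∧ (∀ a, matchedA M a) ∧ (∀ b, matchedB M b)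

/-- `a ∈ A` prefers matching `M` to matching `N`. -/
def prefersA (I : PrefSys A B) (a : A) (M N : Finset (A × B)) : Prop :=
  ∃ b, (a, b) ∈ M ∧ (¬ matchedA N a ∨ ∃ b', (a, b') ∈ N ∧ I.prefA a b b')

/-- `b ∈ B` prefers matching `M` to matching `N`. -/
def prefersB (I : PrefSys A B) (b : B) (M N : Finset (A × B)) : Prop :=
  ∃ a, (a, b) ∈ M ∧ (¬ matchedB N b ∨ ∃ a', (a', b) ∈ N ∧ I.prefB b a a')

/-- A node `u ∈ A ∪ B` prefers matching `M` to matching `N`. -/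
def prefers (I : PrefSys A B) (u : A ⊕ B) (M N : Finset (A × B)) : Prop :=
  match u with
  | Sum.inl a => prefersA I a M N
  | Sum.inr b => prefersB I b M N

/-- `φ(M,N)`: the number of nodes preferring `M` to `N`. -/
def phi [Fintype A] [Fintype B] (I : PrefSys A B) (M N : Finset (A × B)) : ℕ :=
  (Finset.univ.filter (fun u : A ⊕ B => prefers I u M N)).card

/-- `Δ(M,N) = φ(M,N) − φ(N,M)`. -/
def Delta [Fintype A] [Fintype B] (I : PrefSys A B) (M N : Finset (A × B)) : ℤ :=
  (phi I M N : ℤ) - (phi I N M : ℤ)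

/-- A popular max-matching: a maximum matching `M` with `Δ(M,N) ≥ 0`
for every maximum matching `N`. -/
def IsPopularMaxMatching [Fintype A] [Fintype B] (I : PrefSys A B)
    (M : Finset (A × B)) : Prop :=
  IsMaximumMatching I M ∧
    ∀ N : Finset (A × B), IsMaximumMatching I N → 0 ≤ Delta I M N

/-- The edge `(a,b) ∉ M` blocks `M`. -/
def Blocks (I : PrefSys A B) (M : Finset (A × B)) (a : A) (b : B) : Prop :=
  I.E a b ∧ (a, b) ∉ M ∧
  (¬ matchedA M a ∨ ∃ b', (a, b') ∈ M ∧ I.prefA a b b') ∧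
  (¬ matchedB M b ∨ ∃ a', (a', b) ∈ M ∧ I.prefB b a a')

/-- A stable matching: a matching with no blocking edge. -/
def IsStable (I : PrefSys A B) (S : Finset (A × B)) : Prop :=
  IsMatching I S ∧ ∀ a b, ¬ Blocks I S a b

/-- The edge weight `wt_M(a,b) ∈ {0, ±2}`. -/
def wt (I : PrefSys A B) (M : Finset (A × B)) (a : A) (b : B) : ℤ :=
  if Blocks I M a b then 2
  else if (∃ b', (a, b') ∈ M ∧ I.prefA a b' b) ∧ (∃ a', (a', b) ∈ M ∧ I.prefB b a' a) then -2
  else 0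

/-- The underlying simple graph on the node set `A ⊕ B`. -/
def graphOf (I : PrefSys A B) : SimpleGraph (A ⊕ B) :=
  SimpleGraph.fromRel (fun u w =>
    match u, w with
    | Sum.inl a, Sum.inr b => I.E a b
    | _, _ => False)

/-- The (undirected) edge `e` is an edge of the matching `M`. -/
def edgeInM (M : Finset (A × B)) (e : Sym2 (A ⊕ B)) : Prop :=
  ∃ a b, (a, b) ∈ M ∧ e = s(Sum.inl a, Sum.inr b)

/-- Consecutive edges alternate between `M` and `E ∖ M`. -/
def altRel (M : Finset (A × B)) (e f : Sym2 (A ⊕ B)) : Prop :=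
  edgeInM M e ↔ ¬ edgeInM M f

/-- An alternating path with respect to `M`. -/
def IsAltPath (I : PrefSys A B) (M : Finset (A × B)) {u w : A ⊕ B}
    (p : (graphOf I).Walk u w) : Prop :=
  p.IsPath ∧ List.Chain' (altRel M) p.edges

/-- An alternating cycle with respect to `M` (alternation also across the wrap-around). -/
def IsAltCycle (I : PrefSys A B) (M : Finset (A × B)) {w : A ⊕ B}
    (c : (graphOf I).Walk w w) : Prop :=
  c.IsCycle ∧ List.Chain' (altRel M) (c.edges ++ c.edges.take 1)

/-- `wt_M` as a function on undirected edges. -/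
def wtSym (I : PrefSys A B) (M : Finset (A × B)) : Sym2 (A ⊕ B) → ℤ :=
  Sym2.lift ⟨fun u w =>
      match u, w with
      | Sum.inl a, Sum.inr b => wt I M a b
      | Sum.inr b, Sum.inl a => wt I M a b
      | _, _ => 0,
    by rintro (a | b) (a' | b') <;> rfl⟩

/-- `wt_M(ρ) = Σ_{e ∈ ρ} wt_M(e)` for a walk `ρ`. -/
def wtWalk (I : PrefSys A B) (M : Finset (A × B)) {u w : A ⊕ B}
    (p : (graphOf I).Walk u w) : ℤ :=
  (p.edges.map (wtSym I M)).sum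

/-- The node `u ∈ A ∪ B` is unmatched in `M`. -/
def unmatchedNode (M : Finset (A × B)) : A ⊕ B → Prop
  | Sum.inl a => ¬ matchedA M a
  | Sum.inr b => ¬ matchedB M b

/-- The set of edges `(a,b) ∈ A × B` used by the walk `p`. -/
def pairsOf [Fintype A] [Fintype B] (I : PrefSys A B) {u w : A ⊕ B}
    (p : (graphOf I).Walk u w) : Finset (A × B) :=
  Finset.univ.filter (fun ab : A × B => s(Sum.inl ab.1, Sum.inr ab.2) ∈ p.edges)

/-- `M` is Pareto-optimal: no matching `N` has `φ(N,M) > 0` and `φ(M,N) = 0`. -/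
def IsParetoOptimal [Fintype A] [Fintype B] (I : PrefSys A B) (M : Finset (A × B)) : Prop :=
  ¬ ∃ N : Finset (A × B), IsMatching I N ∧ 0 < phi I N M ∧ phi I M N = 0

/-! ### The auxiliary instance `G*` -/

/-- `A* = {a_0, …, a_{n0−1} : a ∈ A}` where `n0 = |A|`. -/
abbrev AStar (A : Type*) [Fintype A] : Type _ := A × Fin (Fintype.card A)

/-- `B* = B̃ ∪ {d_1(a), …, d_{n0−1}(a) : a ∈ A}`; the dummy node `(a, j)`
(with `j : Fin (n0 − 1)`) stands for `d_{j+1}(a)`. -/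
abbrev BStar (A : Type*) (B : Type*) [Fintype A] : Type _ :=
  B ⊕ (A × Fin (Fintype.card A - 1))

/-- The auxiliary instance `G*` with its edges and preferences. -/
def starSys [Fintype A] (I : PrefSys A B) : PrefSys (AStar A) (BStar A B) where
  E := fun ai w =>
    match ai, w with
    | (a, _i), Sum.inl b => I.E a b
    | (a, i), Sum.inr (a', j) => a = a' ∧ ((i : ℕ) = (j : ℕ) ∨ (i : ℕ) = (j : ℕ) + 1)
  prefA := fun ai u v =>
    match ai, u, v with
    | (a, _i), Sum.inl b, Sum.inl b' => I.prefA a b b'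
    | (a, i), Sum.inl _b, Sum.inr (a', j) => a = a' ∧ (j : ℕ) = (i : ℕ)
    | (a, i), Sum.inr (a', j), Sum.inl _b => a = a' ∧ (j : ℕ) + 1 = (i : ℕ)
    | (a, i), Sum.inr (a', j), Sum.inr (a'', j') =>
        a = a' ∧ a = a'' ∧ (j : ℕ) + 1 = (i : ℕ) ∧ (j' : ℕ) = (i : ℕ)
  prefB := fun w x y =>
    match w, x, y with
    | Sum.inl b, (a, i), (a', i') =>
        (i' : ℕ) < (i : ℕ) ∨ ((i : ℕ) = (i' : ℕ) ∧ I.prefB b a a')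
    | Sum.inr (a, j), (a', i), (a'', i') =>
        a' = a ∧ a'' = a ∧ (i : ℕ) = (j : ℕ) ∧ (i' : ℕ) = (j : ℕ) + 1

/-- The projection `S ↦ S'`: delete edges incident to dummy nodes and replace
`(a_i, b̃)` by `(a, b)`. -/
def proj [Fintype A] [Fintype B] (S : Finset (AStar A × BStar A B)) : Finset (A × B) :=
  Finset.univ.filter (fun ab : A × B =>
    ∃ i : Fin (Fintype.card A), ((ab.1, i), (Sum.inl ab.2 : BStar A B)) ∈ S)

/-- `a ∈ A_i` for the level partition of `A` induced by a (stable) matching `S` in `G*`: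
for `i ≤ n0 − 2`, `a ∈ A_i` iff `(a_i, b̃) ∈ S` for some `b̃ ∈ B̃`;
`A_{n0−1}` consists of all remaining nodes of `A`. -/
def AtLevelA [Fintype A] (S : Finset (AStar A × BStar A B)) (a : A) (i : ℕ) : Prop :=
  (i + 1 < Fintype.card A ∧
     ∃ j : Fin (Fintype.card A), (j : ℕ) = i ∧
       ∃ b : B, ((a, j), (Sum.inl b : BStar A B)) ∈ S) ∨
  (i + 1 = Fintype.card A ∧
     ∀ j : Fin (Fintype.card A), (j : ℕ) + 1 < Fintype.card A →
       ∀ b : B, ((a, j), (Sum.inl b : BStar A B)) ∉ S)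

/-- `b ∈ B_i` for the level partition of `B` induced by a (stable) matching `S` in `G*`:
for `1 ≤ i ≤ n0 − 1`, `b ∈ B_i` iff `(a_i, b̃) ∈ S` for some `a ∈ A_i`;
`B_0` consists of all remaining nodes of `B`. -/
def AtLevelB [Fintype A] (S : Finset (AStar A × BStar A B)) (b : B) (i : ℕ) : Prop :=
  (1 ≤ i ∧ i < Fintype.card A ∧
     ∃ j : Fin (Fintype.card A), (j : ℕ) = i ∧
       ∃ a : A, AtLevelA S a i ∧ ((a, j), (Sum.inl b : BStar A B)) ∈ S) ∨
  (i = 0 ∧ ∀ j : Fin (Fintype.card A), 1 ≤ (j : ℕ) →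
       ∀ a : A, AtLevelA S a (j : ℕ) → ((a, j), (Sum.inl b : BStar A B)) ∉ S)


/-- For a stable matching `S` in `G*` with level partitions
`A = A_0 ∪ ⋯ ∪ A_{n0−1}` and `B = B_0 ∪ ⋯ ∪ B_{n0−1}`:
`S' ⊆ ∪_i (A_i × B_i)`, and no edge of `E` with both endpoints in `A_i ∪ B_i`
blocks `S'`. -/
theorem stmt4 {A B : Type*} [Fintype A] [Fintype B] [DecidableEq A] [DecidableEq B]
    (I : PrefSys A B) (hI : I.IsValid)
    (S : Finset (AStar A × BStar A B)) (hS : IsStable (starSys I) S) :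
    (∀ a b, (a, b) ∈ proj S → ∃ i : ℕ, AtLevelA S a i ∧ AtLevelB S b i) ∧
    (∀ (i : ℕ) (a : A) (b : B), I.E a b → AtLevelA S a i → AtLevelB S b i →
        ¬ Blocks I (proj S) a b) := by
  classical
  obtain ⟨⟨hE, hA, hB⟩, hNB⟩ := hS
  have hA' : ∀ x y y', (x, y) ∈ S → (x, y') ∈ S → y = y' := fun x y y' h h' =>
    (Prod.mk.inj (hA _ h _ h' rfl)).2
  have hB' : ∀ x x' y, (x, y) ∈ S → (x', y) ∈ S → x = x' := fun x x' y h h' =>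
    (Prod.mk.inj (hB _ h _ h' rfl)).1
  have hEd : ∀ (a a' : A) (i : Fin (Fintype.card A)) (j : Fin (Fintype.card A - 1)),
      ((a, i), (Sum.inr (a', j) : BStar A B)) ∈ S →
      a = a' ∧ ((i : ℕ) = (j : ℕ) ∨ (i : ℕ) = (j : ℕ) + 1) := fun a a' i j h => hE _ h
  -- every dummy is matched
  have D1 : ∀ (a : A) (j : Fin (Fintype.card A - 1)), ∃ i : Fin (Fintype.card A),
      ((a, i), (Sum.inr (a, j) : BStar A B)) ∈ S ∧
        ((i : ℕ) = (j : ℕ) ∨ (i : ℕ) = (j : ℕ) + 1) := by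
    intro a j
    by_contra hno
    have hun : ¬ matchedB S (Sum.inr (a, j) : BStar A B) := by
      rintro ⟨⟨a', i⟩, h⟩
      obtain ⟨rfl, h2⟩ := hEd _ _ _ _ h
      exact hno ⟨i, h, h2⟩
    have hj : (j : ℕ) + 1 < Fintype.card A := by have := j.2; omega
    apply hNB (a, ⟨(j : ℕ) + 1, hj⟩) (Sum.inr (a, j))
    refine ⟨⟨rfl, Or.inr rfl⟩, fun h => hun ⟨_, h⟩, ?_, Or.inl hun⟩
    by_cases hm : matchedA S (a, (⟨(j : ℕ) + 1, hj⟩ : Fin (Fintype.card A)))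
    · right
      obtain ⟨y, hy⟩ := hm
      refine ⟨y, hy, ?_⟩
      rcases y with b | ⟨a', j'⟩
      · exact ⟨rfl, rfl⟩
      · obtain ⟨rfl, h2⟩ := hEd _ _ _ _ hy
        simp only at h2
        rcases h2 with h2 | h2
        · exact ⟨rfl, rfl, rfl, h2.symm⟩
        · have : j' = j := Fin.ext (by omega)
          subst this
          exact (hun ⟨_, hy⟩).elim
    · exact Or.inl hm
  -- above a real level everything is matched to the lower dummy
  have U : ∀ (m : ℕ) (a : A) (i : Fin (Fintype.card A)) (b : B),
      ((a, i), (Sum.inl b : BStar A B)) ∈ S → ∀ k : Fin (Fintype.card A),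
      (k : ℕ) = (i : ℕ) + 1 + m → ∀ j : Fin (Fintype.card A - 1), (j : ℕ) + 1 = (k : ℕ) →
      ((a, k), (Sum.inr (a, j) : BStar A B)) ∈ S := by
    intro m
    induction m with
    | zero =>
      intro a i b h k hk j hj
      obtain ⟨i', h1, h2⟩ := D1 a j
      rcases h2 with h2 | h2
      · have : i' = i := Fin.ext (by omega)
        subst this
        cases hA' _ _ _ h h1
      · have : i' = k := Fin.ext (by omega)
        subst this
        exact h1
    | succ m ih =>
      intro a i b h k hk j hj
      obtain ⟨i', h1, h2⟩ := D1 a j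
      rcases h2 with h2 | h2
      · have hlt : (i : ℕ) + m < Fintype.card A - 1 := by have := j.2; omega
        have h3 := ih a i b h i' (by omega) ⟨(i : ℕ) + m, hlt⟩ (by simp only; omega)
        have h4 := hA' _ _ _ h1 h3
        have h5 := congrArg Fin.val (Prod.mk.inj (Sum.inr.inj h4)).2
        simp only at h5
        omega
      · have : i' = k := Fin.ext (by omega)
        subst this
        exact h1
  have ult : ∀ (a : A) (i k : Fin (Fintype.card A)) (b b' : B),
      ((a, i), (Sum.inl b : BStar A B)) ∈ S → ((a, k), (Sum.inl b' : BStar A B)) ∈ S →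
      ¬ (i : ℕ) < (k : ℕ) := by
    intro a i k b b' h h' hlt
    have hk := k.2
    have := U ((k : ℕ) - (i : ℕ) - 1) a i b h k (by omega)
      ⟨(k : ℕ) - 1, by omega⟩ (by simp only; omega)
    cases hA' _ _ _ h' this
  have uniq : ∀ (a : A) (i k : Fin (Fintype.card A)) (b b' : B),
      ((a, i), (Sum.inl b : BStar A B)) ∈ S → ((a, k), (Sum.inl b' : BStar A B)) ∈ S →
      i = k := by
    intro a i k b b' h h'
    have h1 := ult a i k b b' h h'
    have h2 := ult a k i b' b h' h
    exact Fin.ext (by omega)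
  -- an unmatched node has its lower copies matched to the upper dummy
  have C : ∀ (a : A), (∀ (i : Fin (Fintype.card A)) (b : B),
      ((a, i), (Sum.inl b : BStar A B)) ∉ S) → ∀ (m : ℕ) (k : Fin (Fintype.card A))
      (j : Fin (Fintype.card A - 1)), (k : ℕ) = m → (j : ℕ) = m →
      ((a, k), (Sum.inr (a, j) : BStar A B)) ∈ S := by
    intro a hno m
    induction m with
    | zero =>
      intro k j hk hj
      by_contra hn
      obtain ⟨i', h1, h2⟩ := D1 a j
      have h2' : (i' : ℕ) = (j : ℕ) + 1 := by
        rcases h2 with h2 | h2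
        · exact (hn (by rwa [show i' = k from Fin.ext (by omega)] at h1)).elim
        · exact h2
      apply hNB (a, k) (Sum.inr (a, j))
      refine ⟨⟨rfl, Or.inl (by omega)⟩, hn, Or.inl ?_, Or.inr ⟨_, h1, rfl, rfl, by omega, h2'⟩⟩
      rintro ⟨b | ⟨a', j'⟩, hy⟩
      · exact hno _ _ hy
      · obtain ⟨rfl, h3⟩ := hEd _ _ _ _ hy
        have : j' = j := Fin.ext (by omega)
        subst this
        exact hn hy
    | succ m ih =>
      intro k j hk hj
      by_contra hn
      obtain ⟨i', h1, h2⟩ := D1 a j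
      have h2' : (i' : ℕ) = (j : ℕ) + 1 := by
        rcases h2 with h2 | h2
        · exact (hn (by rwa [show i' = k from Fin.ext (by omega)] at h1)).elim
        · exact h2
      apply hNB (a, k) (Sum.inr (a, j))
      refine ⟨⟨rfl, Or.inl (by omega)⟩, hn, Or.inl ?_, Or.inr ⟨_, h1, rfl, rfl, by omega, h2'⟩⟩
      rintro ⟨b | ⟨a', j'⟩, hy⟩
      · exact hno _ _ hy
      · obtain ⟨rfl, h3⟩ := hEd _ _ _ _ hy
        rcases h3 with h3 | h3
        · have : j' = j := Fin.ext (by omega)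
          subst this
          exact hn hy
        · have h4 := ih ⟨m, by have := k.2; omega⟩ j' rfl (by omega)
          have h5 := congrArg Fin.val (Prod.mk.inj (hB' _ _ _ hy h4)).2
          simp only at h5
          omega
  have LA : ∀ (a : A) (i : Fin (Fintype.card A)) (b : B),
      ((a, i), (Sum.inl b : BStar A B)) ∈ S → AtLevelA S a (i : ℕ) := by
    intro a i b h
    by_cases hi : (i : ℕ) + 1 < Fintype.card A
    · exact Or.inl ⟨hi, i, rfl, b, h⟩
    · refine Or.inr ⟨by have := i.2; omega, fun j hj b' h' => ?_⟩
      have := uniq _ _ _ _ _ h h'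
      subst this
      exact hi hj
  have hproj : ∀ a b, (a, b) ∈ proj S ↔ ∃ i : Fin (Fintype.card A),
      ((a, i), (Sum.inl b : BStar A B)) ∈ S := by
    intro a b
    simp [proj]
  -- levels of matched nodes are determined
  have LA' : ∀ (a : A) (i : Fin (Fintype.card A)) (b : B) (l : ℕ),
      ((a, i), (Sum.inl b : BStar A B)) ∈ S → AtLevelA S a l → (i : ℕ) = l := by
    rintro a i b l h (⟨_, j, hj, b', h'⟩ | ⟨hl, hno⟩)
    · rw [uniq _ _ _ _ _ h h', hj]
    · by_contra hne
      exact hno i (by have := i.2; omega) b h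
  have LB' : ∀ (a : A) (i : Fin (Fintype.card A)) (b : B) (l : ℕ),
      ((a, i), (Sum.inl b : BStar A B)) ∈ S → AtLevelB S b l → (i : ℕ) = l := by
    rintro a i b l h (⟨_, _, j, hj, a', _, h'⟩ | ⟨hl, hno⟩)
    · rw [(Prod.mk.inj (hB' _ _ _ h h')).2, hj]
    · by_contra hne
      exact hno i (by omega) a (LA _ _ _ h) h
  refine ⟨?_, ?_⟩
  · intro a b hab
    obtain ⟨i, h⟩ := (hproj a b).1 hab
    refine ⟨i, LA _ _ _ h, ?_⟩
    by_cases hi : 1 ≤ (i : ℕ)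
    · exact Or.inl ⟨hi, i.2, i, rfl, a, LA _ _ _ h, h⟩
    · refine Or.inr ⟨by omega, fun j hj a' _ h' => ?_⟩
      have := (Prod.mk.inj (hB' _ _ _ h h')).2
      subst this
      exact hi hj
  · rintro i a b hab hLa hLb ⟨_, hnot, hblA, hblB⟩
    have hi : i < Fintype.card A := by
      rcases hLa with ⟨h, _⟩ | ⟨h, _⟩ <;> omega
    apply hNB (a, ⟨i, hi⟩) (Sum.inl b)
    refine ⟨hab, fun h => hnot ((hproj a b).2 ⟨_, h⟩), ?_, ?_⟩
    · rcases hblA with hu | ⟨b', hb', hp⟩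
      · left
        have hno : ∀ (i : Fin (Fintype.card A)) (b : B),
            ((a, i), (Sum.inl b : BStar A B)) ∉ S := fun i b h => hu ⟨b, (hproj a b).2 ⟨i, h⟩⟩
        have hin : i + 1 = Fintype.card A := by
          rcases hLa with ⟨_, j, _, b', h'⟩ | ⟨h, _⟩
          · exact (hno _ _ h').elim
          · exact h
        rintro ⟨b' | ⟨a', j'⟩, hy⟩
        · exact hno _ _ hy
        · obtain ⟨rfl, h3⟩ := hEd _ _ _ _ hy
          simp only at h3
          have hj' := j'.2
          have h4 := C a hno j' ⟨j', by omega⟩ j' rfl rfl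
          have h5 := congrArg Fin.val (Prod.mk.inj (hB' _ _ _ hy h4)).2
          simp only at h5
          omega
      · right
        obtain ⟨k, hk⟩ := (hproj a b').1 hb'
        have hki : k = ⟨i, hi⟩ := Fin.ext (LA' _ _ _ _ hk hLa)
        subst hki
        exact ⟨_, hk, hp⟩
    · rcases hblB with hu | ⟨a', ha', hp⟩
      · left
        rintro ⟨⟨a', k⟩, h⟩
        exact hu ⟨a', (hproj a' b).2 ⟨k, h⟩⟩
      · right
        obtain ⟨k, hk⟩ := (hproj a' b).1 ha'
        exact ⟨_, hk, Or.inr ⟨(LB' _ _ _ _ hk hLb).symm, hp⟩⟩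

end PopMax
end
end

section
/- Let S be a stable matching in G* with level partitions A = A_0 ∪ ⋯ ∪ A_{n0−1} and B = B_0 ∪ ⋯ ∪ B_{n0−1}. Then for every i and every edge (a,b) ∈ E with a ∈ A_{i+1} and b ∈ B_i, one has wt_{S'}(a,b) = −2, i.e., both a and b are matched in S' and prefer their partners in S' to each other. -/
open Classical

noncomputable section

namespace PopMax

variable {A B : Type*}

theorem aux_uniqA [Fintype A] {I : PrefSys A B} {S : Finset (AStar A × BStar A B)}
    (hS : IsStable (starSys I) S) {x y y'} (h : (x, y) ∈ S) (h' : (x, y') ∈ S) : y = y' :=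
  congrArg Prod.snd (hS.1.2.1 _ h _ h' rfl)

theorem aux_uniqB [Fintype A] {I : PrefSys A B} {S : Finset (AStar A × BStar A B)}
    (hS : IsStable (starSys I) S) {x x' y} (h : (x, y) ∈ S) (h' : (x', y) ∈ S) : x = x' :=
  congrArg Prod.fst (hS.1.2.2 _ h _ h' rfl)

/-- Every dummy is matched, to one of its two neighbours. -/
theorem aux_dummy [Fintype A] {I : PrefSys A B} {S : Finset (AStar A × BStar A B)}
    (hS : IsStable (starSys I) S) (a : A) (k : ℕ) (hk : k + 1 < Fintype.card A) :
    ((a, ⟨k, by omega⟩), (Sum.inr (a, ⟨k, by omega⟩) : BStar A B)) ∈ S ∨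
    ((a, ⟨k + 1, hk⟩), (Sum.inr (a, ⟨k, by omega⟩) : BStar A B)) ∈ S := by
  by_cases hm : matchedB S (Sum.inr (a, ⟨k, by omega⟩) : BStar A B)
  · obtain ⟨⟨a', j⟩, h⟩ := hm
    obtain ⟨h1, h2⟩ := hS.1.1 _ h
    dsimp at h1 h2
    subst h1
    rcases h2 with h2 | h2
    · left
      have : j = ⟨k, by omega⟩ := Fin.ext h2
      rwa [this] at h
    · right
      have : j = ⟨k + 1, hk⟩ := Fin.ext h2
      rwa [this] at h
  · exfalso
    refine hS.2 (a, ⟨k + 1, hk⟩) (Sum.inr (a, ⟨k, by omega⟩)) ⟨⟨rfl, Or.inr rfl⟩, ?_, ?_, Or.inl hm⟩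
    · exact fun h => hm ⟨_, h⟩
    · by_cases hA : matchedA S (a, (⟨k + 1, hk⟩ : Fin (Fintype.card A)))
      · right
        obtain ⟨w, hw⟩ := hA
        refine ⟨w, hw, ?_⟩
        rcases w with b | ⟨a', j⟩
        · exact ⟨rfl, rfl⟩
        · obtain ⟨h1, h2⟩ := hS.1.1 _ hw
          dsimp at h1 h2
          subst h1
          rcases h2 with h2 | h2
          · exact ⟨rfl, rfl, rfl, h2.symm⟩
          · exfalso
            have : j = ⟨k, by omega⟩ := Fin.ext (by simp; omega)
            rw [this] at hw
            exact hm ⟨_, hw⟩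
      · exact Or.inl hA

/-- If no copy of index at most `k` is matched into `B̃`, then `a_k` is matched to `d_{k+1}(a)`. -/
theorem aux_low [Fintype A] {I : PrefSys A B} {S : Finset (AStar A × BStar A B)}
    (hS : IsStable (starSys I) S) (a : A)
    (hn : ∀ j : Fin (Fintype.card A), (j : ℕ) + 1 < Fintype.card A →
       ∀ b : B, ((a, j), (Sum.inl b : BStar A B)) ∉ S) (k : ℕ) :
    ∀ (hk : k + 1 < Fintype.card A),
    ((a, ⟨k, by omega⟩), (Sum.inr (a, ⟨k, by omega⟩) : BStar A B)) ∈ S := by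
  induction k with
  | zero =>
    intro hk
    by_contra hc
    refine hS.2 (a, ⟨0, by omega⟩) (Sum.inr (a, ⟨0, by omega⟩)) ⟨⟨rfl, Or.inl rfl⟩, hc, ?_, ?_⟩
    · left
      rintro ⟨w, hw⟩
      rcases w with b | ⟨a', j⟩
      · exact hn _ hk _ hw
      · obtain ⟨h1, h2⟩ := hS.1.1 _ hw
        dsimp at h1 h2
        subst h1
        have : j = ⟨0, by omega⟩ := Fin.ext (by simp; omega)
        rw [this] at hw
        exact hc hw
    · right
      exact ⟨_, (aux_dummy hS a 0 hk).resolve_left hc, rfl, rfl, rfl, rfl⟩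
  | succ k ih =>
    intro hk
    have ih := ih (by omega)
    by_contra hc
    refine hS.2 (a, ⟨k + 1, by omega⟩) (Sum.inr (a, ⟨k + 1, by omega⟩))
      ⟨⟨rfl, Or.inl rfl⟩, hc, ?_, ?_⟩
    · left
      rintro ⟨w, hw⟩
      rcases w with b | ⟨a', j⟩
      · exact hn _ hk _ hw
      · obtain ⟨h1, h2⟩ := hS.1.1 _ hw
        dsimp at h1 h2
        subst h1
        rcases h2 with h2 | h2
        · have : j = ⟨k + 1, by omega⟩ := Fin.ext (by simp; omega)
          rw [this] at hw
          exact hc hw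
        · have : j = ⟨k, by omega⟩ := Fin.ext (by simp; omega)
          rw [this] at hw
          have := aux_uniqB hS hw ih
          simp at this
    · right
      exact ⟨_, (aux_dummy hS a (k + 1) hk).resolve_left hc, rfl, rfl, rfl, rfl⟩

theorem aux_high [Fintype A] {I : PrefSys A B} {S : Finset (AStar A × BStar A B)}
    (hS : IsStable (starSys I) S) (a : A) (b : B) (k : ℕ) (hk : k < Fintype.card A)
    (h : ((a, ⟨k, hk⟩), (Sum.inl b : BStar A B)) ∈ S) (m : ℕ) :
    ∀ (hm : k + m + 1 < Fintype.card A),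
    ((a, ⟨k + m + 1, hm⟩), (Sum.inr (a, ⟨k + m, by omega⟩) : BStar A B)) ∈ S := by
  induction m with
  | zero =>
    intro hm
    refine (aux_dummy hS a k hm).resolve_left fun hc => ?_
    have := aux_uniqA hS h hc
    simp at this
  | succ m ih =>
    intro hm
    refine (aux_dummy hS a (k + m + 1) hm).resolve_left fun hc => ?_
    have := aux_uniqA hS (ih (by omega)) hc
    simp at this

/-- A copy matched into `B̃` determines the level. -/
theorem aux_level [Fintype A] {I : PrefSys A B} {S : Finset (AStar A × BStar A B)}
    (hS : IsStable (starSys I) S) (a : A) (b : B) (j : Fin (Fintype.card A))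
    (h : ((a, j), (Sum.inl b : BStar A B)) ∈ S) : AtLevelA S a j := by
  by_cases hj : (j : ℕ) + 1 < Fintype.card A
  · exact Or.inl ⟨hj, j, rfl, b, h⟩
  · have hj' := j.2
    refine Or.inr ⟨by omega, ?_⟩
    rintro ⟨k, hk⟩ hk1 b' hb'
    dsimp at hk1
    have := aux_high hS a b' k hk hb' (Fintype.card A - 2 - k) (by omega)
    have e : j = ⟨k + (Fintype.card A - 2 - k) + 1, by omega⟩ := Fin.ext (by simp; omega)
    rw [← e] at this
    have := aux_uniqA hS h this
    simp at this

theorem aux_down [Fintype A] {I : PrefSys A B} {S : Finset (AStar A × BStar A B)}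
    (hS : IsStable (starSys I) S) (a : A) (i : ℕ) (h : AtLevelA S a (i + 1))
    (hk : i + 1 < Fintype.card A) :
    ((a, ⟨i, by omega⟩), (Sum.inr (a, ⟨i, by omega⟩) : BStar A B)) ∈ S := by
  rcases h with ⟨_, j, hj, b, hb⟩ | ⟨_, hn⟩
  · refine (aux_dummy hS a i hk).resolve_right fun hc => ?_
    have : j = ⟨i + 1, hk⟩ := Fin.ext hj
    subst this
    have := aux_uniqA hS hb hc
    simp at this
  · exact aux_low hS a hn i hk

/-- For a stable matching `S` in `G*` with level partitions as above:
every edge `(a,b) ∈ E` with `a ∈ A_{i+1}` and `b ∈ B_i` has `wt_{S'}(a,b) = −2`,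
i.e., both `a` and `b` are matched in `S'` and prefer their partners in `S'`
to each other. -/
theorem stmt5 {A B : Type*} [Fintype A] [Fintype B] [DecidableEq A] [DecidableEq B]
    (I : PrefSys A B) (hI : I.IsValid)
    (S : Finset (AStar A × BStar A B)) (hS : IsStable (starSys I) S) :
    ∀ (i : ℕ) (a : A) (b : B), I.E a b → AtLevelA S a (i + 1) → AtLevelB S b i →
      wt I (proj S) a b = -2 ∧
      (∃ b', (a, b') ∈ proj S ∧ I.prefA a b' b) ∧
      (∃ a', (a', b) ∈ proj S ∧ I.prefB b a' a) := by
  intro i a b hab hA hB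
  have hk : i + 1 < Fintype.card A := by
    rcases hA with ⟨h, _⟩ | ⟨h, _⟩ <;> omega
  have hd := aux_down hS a i hA hk
  obtain ⟨irrA, trA, totA, irrB, trB, totB⟩ := hI
  -- `b̃` is matched to a better neighbour than `a_i`
  have hb1 : ∃ a' : A, ∃ j : Fin (Fintype.card A), ((a', j), (Sum.inl b : BStar A B)) ∈ S ∧
      (i < (j : ℕ) ∨ (i = (j : ℕ) ∧ I.prefB b a' a)) := by
    by_contra hc
    have hnot : ((a, ⟨i, by omega⟩), (Sum.inl b : BStar A B)) ∉ S := by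
      intro h
      have := aux_uniqA hS h hd
      simp at this
    refine hS.2 (a, ⟨i, by omega⟩) (Sum.inl b) ⟨hab, hnot, Or.inr ⟨_, hd, rfl, rfl⟩, ?_⟩
    by_cases hm : matchedB S (Sum.inl b : BStar A B)
    · right
      obtain ⟨⟨a', j⟩, h⟩ := hm
      refine ⟨(a', j), h, ?_⟩
      rcases lt_trichotomy (j : ℕ) i with hlt | heq | hgt
      · exact Or.inl hlt
      · refine Or.inr ⟨heq.symm, ?_⟩
        have hne : a ≠ a' := by
          rintro rfl
          apply hnot
          have : j = ⟨i, by omega⟩ := Fin.ext heq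
          rwa [this] at h
        exact (totB b a a' hab (hS.1.1 _ h) hne).resolve_right
          fun hp => hc ⟨a', j, h, Or.inr ⟨heq.symm, hp⟩⟩
      · exact absurd ⟨a', j, h, Or.inl hgt⟩ hc
    · exact Or.inl hm
  obtain ⟨a', j, hj, hpref⟩ := hb1
  have hji : (j : ℕ) = i := by
    rcases hB with ⟨_, _, j', hj', a'', _, h'⟩ | ⟨h0, hn⟩
    · have := aux_uniqB hS hj h'
      simp only [Prod.mk.injEq] at this
      rw [this.2]; exact hj'
    · by_contra hne
      exact hn j (by omega) a' (aux_level hS a' b j hj) hj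
  have hpB : I.prefB b a' a := by
    rcases hpref with h | h
    · omega
    · exact h.2
  -- `a_{i+1}` is matched to a better neighbour in `B̃`
  have ha1 : ∃ b', ((a, ⟨i + 1, hk⟩), (Sum.inl b' : BStar A B)) ∈ S ∧ I.prefA a b' b := by
    by_contra hc
    have hnot : ((a, ⟨i + 1, hk⟩), (Sum.inl b : BStar A B)) ∉ S := by
      intro h
      have := aux_uniqB hS h hj
      simp only [Prod.mk.injEq] at this
      have := congrArg Fin.val this.2
      simp at this
      omega
    refine hS.2 (a, ⟨i + 1, hk⟩) (Sum.inl b) ⟨hab, hnot, ?_, Or.inr ⟨_, hj, Or.inl ?_⟩⟩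
    · by_cases hm : matchedA S (a, (⟨i + 1, hk⟩ : Fin (Fintype.card A)))
      · right
        obtain ⟨w, hw⟩ := hm
        refine ⟨w, hw, ?_⟩
        rcases w with b' | ⟨a'', l⟩
        · have hne : b ≠ b' := by
            rintro rfl
            exact hnot hw
          exact (totA a b b' hab (hS.1.1 _ hw) hne).resolve_right fun hp => hc ⟨b', hw, hp⟩
        · obtain ⟨h1, h2⟩ := hS.1.1 _ hw
          dsimp at h1 h2
          subst h1
          rcases h2 with h2 | h2
          · exact ⟨rfl, h2.symm⟩
          · exfalso
            have : l = ⟨i, by omega⟩ := Fin.ext (by simp; omega)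
            rw [this] at hw
            have := aux_uniqB hS hw hd
            simp at this
      · exact Or.inl hm
    · show (j : ℕ) < i + 1
      omega
  obtain ⟨b', hb', hpA⟩ := ha1
  have hPA : (a, b') ∈ proj S := by
    simp only [proj, Finset.mem_filter, Finset.mem_univ, true_and]
    exact ⟨_, hb'⟩
  have hPB : (a', b) ∈ proj S := by
    simp only [proj, Finset.mem_filter, Finset.mem_univ, true_and]
    exact ⟨_, hj⟩
  have c1 : ∃ b', (a, b') ∈ proj S ∧ I.prefA a b' b := ⟨b', hPA, hpA⟩
  have c2 : ∃ a', (a', b) ∈ proj S ∧ I.prefB b a' a := ⟨a', hPB, hpB⟩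
  refine ⟨?_, c1, c2⟩
  have hnb : ¬ Blocks I (proj S) a b := by
    rintro ⟨_, _, _, h | ⟨a2, h2, hp⟩⟩
    · exact h ⟨a', hPB⟩
    · simp only [proj, Finset.mem_filter, Finset.mem_univ, true_and] at h2
      obtain ⟨l, hl⟩ := h2
      have := aux_uniqB hS hl hj
      simp only [Prod.mk.injEq] at this
      rw [this.1] at hp
      exact irrB b a (trB b a a' a hp hpB)
  unfold wt
  rw [if_neg hnb, if_pos ⟨c1, c2⟩]

end PopMax
end
end

section
/- Let S be a stable matching in G* with level partitions A = A_0 ∪ ⋯ ∪ A_{n0−1} and B = B_0 ∪ ⋯ ∪ B_{n0−1}. Then G has no edge (a,b) with a ∈ A_i and b ∈ B_j where i ≥ j+2. -/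
open Classical

noncomputable section

namespace PopMax

variable {A B : Type*}

/-- If `a_{k+1}` is matched to something other than `d_{k+1}` in a way that it prefers `d_{k+1}`,
then `d_{k+1}` is matched to `a_k`. -/
theorem step_down {A B : Type*} [Fintype A] (I : PrefSys A B)
    (S : Finset (AStar A × BStar A B)) (hS : IsStable (starSys I) S) (a : A) (k : ℕ)
    (hk : k + 1 < Fintype.card A) (w : BStar A B)
    (hw : ((a, (⟨k + 1, hk⟩ : Fin (Fintype.card A))), w) ∈ S)
    (hp : (starSys I).prefA (a, ⟨k + 1, hk⟩) (Sum.inr (a, ⟨k, by omega⟩)) w)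
    (hne : w ≠ Sum.inr (a, ⟨k, by omega⟩)) :
    ((a, (⟨k, by omega⟩ : Fin (Fintype.card A))),
      (Sum.inr (a, ⟨k, by omega⟩) : BStar A B)) ∈ S := by
  obtain ⟨⟨hE, hA, hB⟩, hst⟩ := hS
  have hnot : ((a, (⟨k + 1, hk⟩ : Fin (Fintype.card A))),
      (Sum.inr (a, ⟨k, by omega⟩) : BStar A B)) ∉ S := by
    intro h
    have := hA _ hw _ h rfl
    exact hne (congrArg Prod.snd this)
  by_contra hcon
  apply hst (a, ⟨k + 1, hk⟩) (Sum.inr (a, ⟨k, by omega⟩))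
  refine ⟨⟨rfl, Or.inr rfl⟩, hnot, Or.inr ⟨w, hw, hp⟩, Or.inl ?_⟩
  rintro ⟨⟨a', ⟨i, hi⟩⟩, hx⟩
  have he := hE _ hx
  simp only [starSys] at he
  obtain ⟨rfl, rfl | rfl⟩ := he
  · exact hcon hx
  · exact hnot hx

theorem all_down {A B : Type*} [Fintype A] (I : PrefSys A B)
    (S : Finset (AStar A × BStar A B)) (hS : IsStable (starSys I) S) (a : A) (k : ℕ)
    (hk : k < Fintype.card A) (b : B)
    (hw : ((a, (⟨k, hk⟩ : Fin (Fintype.card A))), (Sum.inl b : BStar A B)) ∈ S) :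
    ∀ t m : ℕ, ∀ h : m + t + 1 = k, ((a, (⟨m, by omega⟩ : Fin (Fintype.card A))),
      (Sum.inr (a, ⟨m, by omega⟩) : BStar A B)) ∈ S := by
  intro t
  induction t with
  | zero =>
    intro m h
    have h' : m + 1 = k := by omega
    subst h'
    exact step_down I S hS a m hk _ hw ⟨rfl, rfl⟩ (by simp)
  | succ t ih =>
    intro m h
    have := ih (m + 1) (by omega)
    exact step_down I S hS a m (by omega) _ this ⟨rfl, rfl, rfl, rfl⟩ (by simp)

theorem all_up {A B : Type*} [Fintype A] (I : PrefSys A B)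
    (S : Finset (AStar A × BStar A B)) (hS : IsStable (starSys I) S) (a : A)
    (hw : ∀ j : Fin (Fintype.card A), (j : ℕ) + 1 < Fintype.card A →
       ∀ b : B, ((a, j), (Sum.inl b : BStar A B)) ∉ S) :
    ∀ m : ℕ, ∀ h : m + 1 < Fintype.card A, ((a, (⟨m, by omega⟩ : Fin (Fintype.card A))),
      (Sum.inr (a, ⟨m, by omega⟩) : BStar A B)) ∈ S := by
  intro m
  obtain ⟨⟨hE, hA, hB⟩, hst⟩ := hS
  induction m with
  | zero =>
    intro h
    by_contra hcon
    apply hst (a, ⟨0, by omega⟩) (Sum.inr (a, ⟨0, by omega⟩))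
    refine ⟨⟨rfl, Or.inl rfl⟩, hcon, Or.inl ?_, ?_⟩
    · rintro ⟨b | ⟨a', ⟨j, hj⟩⟩, hx⟩
      · exact hw _ h b hx
      · have he := hE _ hx
        simp only [starSys] at he
        obtain ⟨rfl, he | he⟩ := he
        · subst he; exact hcon hx
        · omega
    · by_cases hm : matchedB S (Sum.inr (a, ⟨0, by omega⟩))
      · obtain ⟨⟨a', ⟨i, hi⟩⟩, hx⟩ := hm
        refine Or.inr ⟨_, hx, ?_⟩
        have he := hE _ hx
        simp only [starSys] at he
        obtain ⟨rfl, rfl | rfl⟩ := he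
        · exact absurd hx hcon
        · exact ⟨rfl, rfl, rfl, rfl⟩
      · exact Or.inl hm
  | succ m ih =>
    intro h
    have ih := ih (by omega)
    by_contra hcon
    apply hst (a, ⟨m + 1, by omega⟩) (Sum.inr (a, ⟨m + 1, by omega⟩))
    refine ⟨⟨rfl, Or.inl rfl⟩, hcon, Or.inl ?_, ?_⟩
    · rintro ⟨b | ⟨a', ⟨j, hj⟩⟩, hx⟩
      · exact hw _ h b hx
      · have he := hE _ hx
        simp only [starSys] at he
        obtain ⟨rfl, he | he⟩ := he
        · subst he; exact hcon hx
        · have he : m = j := by omega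
          subst he
          have := hB _ ih _ hx rfl
          simp at this
    · by_cases hm : matchedB S (Sum.inr (a, ⟨m + 1, by omega⟩))
      · obtain ⟨⟨a', ⟨i, hi⟩⟩, hx⟩ := hm
        refine Or.inr ⟨_, hx, ?_⟩
        have he := hE _ hx
        simp only [starSys] at he
        obtain ⟨rfl, rfl | rfl⟩ := he
        · exact absurd hx hcon
        · exact ⟨rfl, rfl, rfl, rfl⟩
      · exact Or.inl hm

/-- For a stable matching `S` in `G*` with level partitions as above:
`G` has no edge `(a,b)` with `a ∈ A_i` and `b ∈ B_j` where `i ≥ j + 2`. -/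
theorem stmt6 {A B : Type*} [Fintype A] [Fintype B] [DecidableEq A] [DecidableEq B]
    (I : PrefSys A B) (hI : I.IsValid)
    (S : Finset (AStar A × BStar A B)) (hS : IsStable (starSys I) S) :
    ∀ (i j : ℕ) (a : A) (b : B), AtLevelA S a i → AtLevelB S b j → j + 2 ≤ i →
      ¬ I.E a b := by
  intro i j a b hAi hBj hij hab
  have key : ∃ h : i < Fintype.card A, ((a, (⟨i - 1, by omega⟩ : Fin (Fintype.card A))),
      (Sum.inr (a, ⟨i - 1, by omega⟩) : BStar A B)) ∈ S := by
    rcases hAi with ⟨h1, ⟨j', hj'⟩, h2, b', hb'⟩ | ⟨h1, h2⟩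
    · simp only at h2
      subst h2
      exact ⟨hj', all_down I S hS a j' hj' b' hb' 0 (j' - 1) (by omega)⟩
    · exact ⟨by omega, all_up I S hS a h2 (i - 1) (by omega)⟩
  obtain ⟨hi, key⟩ := key
  have low : ∀ (a' : A) (k : Fin (Fintype.card A)),
      ((a', k), (Sum.inl b : BStar A B)) ∈ S → (k : ℕ) < i - 1 := by
    intro a' k hk
    rcases hBj with ⟨h1, h2, l, hl, a'', -, hm⟩ | ⟨h1, h2⟩
    · have := hS.1.2.2 _ hk _ hm rfl
      simp only [Prod.mk.injEq] at this
      obtain ⟨⟨-, rfl⟩, -⟩ := this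
      omega
    · by_cases hk1 : 1 ≤ (k : ℕ)
      · exfalso
        refine h2 k hk1 a' ?_ hk
        by_cases hlt : (k : ℕ) + 1 < Fintype.card A
        · exact Or.inl ⟨hlt, k, rfl, b, hk⟩
        · have hk2 := k.2
          refine Or.inr ⟨by omega, ?_⟩
          rintro ⟨l, hl⟩ hl2 b' hb'
          simp only at hl2
          have h3 := all_down I S hS a' k hk2 b hk ((k : ℕ) - 1 - l) l (by omega)
          have := hS.1.2.1 _ h3 _ hb' rfl
          simp at this
      · omega
  apply hS.2 (a, ⟨i - 1, by omega⟩) (Sum.inl b)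
  refine ⟨hab, ?_, Or.inr ⟨_, key, rfl, rfl⟩, ?_⟩
  · intro h
    exact absurd (low _ _ h) (by simp)
  · by_cases hm : matchedB S (Sum.inl b)
    · obtain ⟨⟨a', k⟩, hx⟩ := hm
      exact Or.inr ⟨_, hx, Or.inl (low _ _ hx)⟩
    · exact Or.inl hm

end PopMax
end
end

section
/- Let S be a stable matching in G* with level partitions A = A_0 ∪ ⋯ ∪ A_{n0−1} and B = B_0 ∪ ⋯ ∪ B_{n0−1}. Then every edge of E that blocks S' lies in A_i × B_j for some i ≤ j−1. -/
open Classical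

noncomputable section

namespace PopMax

variable {A B : Type*}

theorem dummy_matched {A B : Type*} [Fintype A] (I : PrefSys A B)
    (S : Finset (AStar A × BStar A B)) (hS : IsStable (starSys I) S) (a : A) (j : ℕ)
    (hj : j < Fintype.card A - 1) :
    ((a, ⟨j, by omega⟩), (Sum.inr (a, ⟨j, hj⟩) : BStar A B)) ∈ S ∨
    ((a, ⟨j + 1, by omega⟩), (Sum.inr (a, ⟨j, hj⟩) : BStar A B)) ∈ S := by
  obtain ⟨⟨hE, hA, hB⟩, hst⟩ := hS
  by_contra! hcon
  obtain ⟨h1, h2⟩ := hcon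
  apply hst (a, ⟨j + 1, by omega⟩) (Sum.inr (a, ⟨j, hj⟩))
  refine ⟨by simp [starSys], h2, ?_, ?_⟩
  · by_cases hm : matchedA S (a, (⟨j + 1, by omega⟩ : Fin (Fintype.card A)))
    · right
      obtain ⟨w, hw⟩ := hm
      refine ⟨w, hw, ?_⟩
      rcases w with b | ⟨a', j'⟩
      · simp [starSys]
      · have := hE _ hw
        simp only [starSys] at this ⊢
        obtain ⟨rfl, h | h⟩ := this
        · simpa using h.symm
        · exfalso
          apply h2
          have : j' = ⟨j, hj⟩ := by ext; simp; omega
          rw [← this]; exact hw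
    · exact Or.inl hm
  · left
    rintro ⟨⟨a', i⟩, hw⟩
    have := hE _ hw
    simp only [starSys] at this
    obtain ⟨rfl, h | h⟩ := this
    · apply h1
      have : i = ⟨j, by omega⟩ := by ext; simpa using h
      rw [← this]; exact hw
    · apply h2
      have : i = ⟨j + 1, by omega⟩ := by ext; simpa using h
      rw [← this]; exact hw

theorem level_struct {A B : Type*} [Fintype A] (I : PrefSys A B)
    (S : Finset (AStar A × BStar A B)) (hS : IsStable (starSys I) S) (a : A) :
    ∃ k : Fin (Fintype.card A),
      (∀ i, i ≠ k → ∀ b : B, ((a, i), (Sum.inl b : BStar A B)) ∉ S) ∧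
      (∀ w, ((a, k), (Sum.inr w : BStar A B)) ∉ S) ∧
      ((k : ℕ) + 1 < Fintype.card A → ∃ b : B, ((a, k), (Sum.inl b : BStar A B)) ∈ S) := by
  have hpos : 0 < Fintype.card A := Fintype.card_pos_iff.mpr ⟨a⟩
  have hd := dummy_matched I S hS a
  obtain ⟨⟨hE, hA, hB⟩, hst⟩ := hS
  have hex : ∃ j : ℕ, ∀ h : j < Fintype.card A - 1,
    ((a, (⟨j, by omega⟩ : Fin (Fintype.card A))), (Sum.inr (a, ⟨j, h⟩) : BStar A B)) ∉ S :=
    ⟨Fintype.card A - 1, fun h => by omega⟩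
  have hk := Nat.find_spec hex
  have hmin := fun m => Nat.find_min (H := hex) (m := m)
  have hkn : Nat.find hex ≤ Fintype.card A - 1 := Nat.find_min' hex (fun h => by omega)
  generalize Nat.find hex = k at hk hmin hkn
  have hlow : ∀ j, j < k → ∃ (h : j < Fintype.card A - 1),
    ((a, (⟨j, by omega⟩ : Fin (Fintype.card A))), (Sum.inr (a, ⟨j, h⟩) : BStar A B)) ∈ S := by
    intro j hj
    have := hmin j hj
    push Not at this
    exact this
  have hhigh : ∀ j, k ≤ j → ∀ (h : j < Fintype.card A - 1),
    ((a, (⟨j + 1, by omega⟩ : Fin (Fintype.card A))), (Sum.inr (a, ⟨j, h⟩) : BStar A B)) ∈ S := by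
    intro j hj
    induction j, hj using Nat.le_induction with
    | base => intro h; exact (hd k h).resolve_left (hk h)
    | succ j hj ih =>
      intro h
      refine (hd (j + 1) h).resolve_left fun h' => ?_
      have := hA _ h' _ (ih (by omega)) rfl
      simp at this
  refine ⟨⟨k, by omega⟩, ?_, ?_, ?_⟩
  · rintro ⟨i, hi⟩ hne b hb
    rcases lt_or_ge i k with h | h
    · obtain ⟨h1, h2⟩ := hlow i h
      have := hA _ hb _ h2 rfl
      simp at this
    · have hne' : i ≠ k := fun h => hne (by ext; exact h)
      obtain ⟨m, rfl⟩ : ∃ m, i = m + 1 := ⟨i - 1, by omega⟩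
      have := hA _ hb _ (hhigh m (by omega) (by omega)) rfl
      simp at this
  · rintro ⟨a', j, hj⟩ hw
    have := hE _ hw
    simp only [starSys] at this
    obtain ⟨rfl, h | h⟩ := this
    · subst h
      exact hk hj hw
    · obtain ⟨h1, h2⟩ := hlow j (by omega)
      have := hB _ hw _ h2 rfl
      simp at this
      omega
  · intro hlt
    simp only at hlt
    have hlt' : k < Fintype.card A - 1 := by omega
    by_contra hno
    have hnd : ¬ matchedA S (a, (⟨k, by omega⟩ : Fin (Fintype.card A))) := by
      rintro ⟨w, hw⟩
      rcases w with b | ⟨a', j, hj⟩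
      · exact hno ⟨b, hw⟩
      · have := hE _ hw
        simp only [starSys] at this
        obtain ⟨rfl, h | h⟩ := this
        · subst h
          exact hk hj hw
        · obtain ⟨h1, h2⟩ := hlow j (by omega)
          have := hB _ hw _ h2 rfl
          simp at this
          omega
    apply hst (a, ⟨k, by omega⟩) (Sum.inr (a, ⟨k, hlt'⟩))
    refine ⟨by simp [starSys], hk hlt', Or.inl hnd, Or.inr ⟨_, hhigh k le_rfl hlt', ?_⟩⟩
    simp [starSys]

/-- For a stable matching `S` in `G*` with level partitions as above:
every edge of `E` that blocks `S'` lies in `A_i × B_j` for some `i ≤ j − 1`. -/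
theorem stmt7 {A B : Type*} [Fintype A] [Fintype B] [DecidableEq A] [DecidableEq B]
    (I : PrefSys A B) (hI : I.IsValid)
    (S : Finset (AStar A × BStar A B)) (hS : IsStable (starSys I) S) :
    ∀ (a : A) (b : B), Blocks I (proj S) a b →
      ∃ i j : ℕ, AtLevelA S a i ∧ AtLevelB S b j ∧ i + 1 ≤ j := by
  intro a b hbl
  obtain ⟨k, hk1, hk2, hk3⟩ := level_struct I S hS a
  have hls := level_struct I S hS
  obtain ⟨⟨hE, hA, hB⟩, hst⟩ := hS
  obtain ⟨hab, hnot, ha, hb⟩ := hbl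
  have hproj : ∀ x y, (x, y) ∈ proj S ↔
      ∃ i : Fin (Fintype.card A), ((x, i), (Sum.inl y : BStar A B)) ∈ S := by
    intro x y; simp [proj]
  have hn := hst (a, k) (Sum.inl b)
  have haS : ¬ matchedA S (a, k) ∨ ∃ w, ((a, k), w) ∈ S ∧ (starSys I).prefA (a, k) (Sum.inl b) w := by
    by_cases hm : matchedA S (a, k)
    · right
      obtain ⟨w, hw⟩ := hm
      refine ⟨w, hw, ?_⟩
      rcases w with b' | w
      · rcases ha with ha | ⟨b'', h1, h2⟩
        · exact absurd ⟨b', (hproj _ _).2 ⟨k, hw⟩⟩ ha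
        · obtain ⟨i, hi⟩ := (hproj _ _).1 h1
          have hik : i = k := by
            by_contra hne
            exact hk1 i hne _ hi
          subst hik
          have := hA _ hw _ hi rfl
          simp at this
          subst this
          exact h2
      · exact absurd hw (hk2 w)
    · exact Or.inl hm
  have hbS : ¬ (¬ matchedB S (Sum.inl b : BStar A B) ∨ ∃ x, (x, (Sum.inl b : BStar A B)) ∈ S ∧
      (starSys I).prefB (Sum.inl b) (a, k) x) := fun h =>
    hn ⟨hab, fun h' => hnot ((hproj _ _).2 ⟨k, h'⟩), haS, h⟩
  push Not at hbS
  obtain ⟨⟨⟨a', i⟩, hw⟩, hnp⟩ := hbS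
  have hnp' := hnp _ hw
  simp only [starSys, not_or, not_and] at hnp'
  obtain ⟨h1, h2⟩ := hnp'
  have hpref : I.prefB b a a' := by
    rcases hb with hb | ⟨a'', h3, h4⟩
    · exact absurd ⟨a', (hproj _ _).2 ⟨i, hw⟩⟩ hb
    · obtain ⟨i', hi'⟩ := (hproj _ _).1 h3
      have := hB _ hw _ hi' rfl
      simp at this
      obtain ⟨rfl, rfl⟩ := this
      exact h4
  have hki : (k : ℕ) < i := by
    have : (k : ℕ) ≠ i := fun h => h2 h hpref
    omega
  have hin := i.2
  refine ⟨k, i, Or.inl ⟨by omega, k, rfl, hk3 (by omega)⟩,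
    Or.inl ⟨by omega, hin, i, rfl, a', ?_, hw⟩, hki⟩
  by_cases hi : (i : ℕ) + 1 < Fintype.card A
  · exact Or.inl ⟨hi, i, rfl, b, hw⟩
  · refine Or.inr ⟨by omega, fun j hj b' hb' => ?_⟩
    obtain ⟨k', hk', -, -⟩ := hls a'
    have e1 : i = k' := by
      by_contra hne
      exact hk' i hne _ hw
    have e2 : j = k' := by
      by_contra hne
      exact hk' j hne _ hb'
    rw [e2, ← e1] at hj
    exact hi hj


end PopMax
end
end

section
/- Let S be a stable matching in G*. Then S' is a maximum matching in G, i.e., there is no augmenting path in G with respect to S'. -/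
open Classical

noncomputable section

namespace PopMax

variable {A B : Type*}

/-- natural-number indexed real edges of S -/
def TT [Fintype A] (S : Finset (AStar A × BStar A B)) (a : A) (i : ℕ) (b : B) : Prop :=
  ∃ hi : i < Fintype.card A, ((a, ⟨i, hi⟩), (Sum.inl b : BStar A B)) ∈ S

/-- natural-number indexed dummy edges of S -/
def DD [Fintype A] (S : Finset (AStar A × BStar A B)) (a : A) (i j : ℕ) : Prop :=
  ∃ (hi : i < Fintype.card A) (hj : j < Fintype.card A - 1),
    ((a, ⟨i, hi⟩), (Sum.inr (a, ⟨j, hj⟩) : BStar A B)) ∈ S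

section aux
variable [Fintype A] {I : PrefSys A B} {S : Finset (AStar A × BStar A B)}

lemma DD_edge (hS : IsStable (starSys I) S) {a : A} {i j : ℕ} (h : DD S a i j) :
    i = j ∨ i = j + 1 := by
  obtain ⟨hi, hj, h⟩ := h
  exact (hS.1.1 _ h).2

lemma dd_dummy (hS : IsStable (starSys I) S) {a : A} {j : ℕ} (h : j + 1 < Fintype.card A) :
    DD S a j j ∨ DD S a (j+1) j := by
  by_contra hc
  push Not at hc
  have hj : j < Fintype.card A - 1 := by omega
  refine hS.2 (a, ⟨j+1, h⟩) (Sum.inr (a, ⟨j, hj⟩)) ⟨⟨rfl, Or.inr rfl⟩, ?_, ?_, Or.inl ?_⟩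
  · intro hm; exact hc.2 ⟨_, _, hm⟩
  · by_cases hm : matchedA S (a, ⟨j+1, h⟩)
    · right
      obtain ⟨w, hw⟩ := hm
      refine ⟨w, hw, ?_⟩
      rcases w with b | ⟨a', j'⟩
      · exact ⟨rfl, rfl⟩
      · have he := hS.1.1 _ hw
        obtain ⟨rfl, he⟩ := he
        simp only at he
        refine ⟨rfl, rfl, rfl, ?_⟩
        rcases he with he | he
        · exact he.symm
        · exfalso
          apply hc.2
          have : j' = ⟨j, hj⟩ := by ext; simp only; omega
          subst this
          exact ⟨_, _, hw⟩
    · exact Or.inl hm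
  · rintro ⟨⟨a', i⟩, hw⟩
    obtain ⟨h1, he⟩ := hS.1.1 _ hw
    simp only at h1 he
    subst h1
    rcases he with he | he
    · have : i = ⟨j, Nat.lt_of_succ_lt h⟩ := by ext; exact he
      subst this; exact hc.1 ⟨_, _, hw⟩
    · have : i = ⟨j+1, h⟩ := by ext; exact he
      subst this; exact hc.2 ⟨_, _, hw⟩

lemma dd_fun (hS : IsStable (starSys I) S) {a : A} {i j j' : ℕ} (h : DD S a i j)
    (h' : DD S a i j') : j = j' := by
  obtain ⟨hi, hj, h⟩ := h
  obtain ⟨hi', hj', h'⟩ := h'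
  have := hS.1.2.1 _ h _ h' rfl
  simpa using this

lemma dd_inj (hS : IsStable (starSys I) S) {a : A} {i i' j : ℕ} (h : DD S a i j)
    (h' : DD S a i' j) : i = i' := by
  obtain ⟨hi, hj, h⟩ := h
  obtain ⟨hi', hj', h'⟩ := h'
  have := hS.1.2.2 _ h _ h' rfl
  simpa using this

lemma dd_tt (hS : IsStable (starSys I) S) {a : A} {i j : ℕ} {b : B} (h : DD S a i j)
    (h' : TT S a i b) : False := by
  obtain ⟨hi, hj, h⟩ := h
  obtain ⟨hi', h'⟩ := h'
  have := hS.1.2.1 _ h _ h' rfl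
  simp at this

lemma tt_fun (hS : IsStable (starSys I) S) {a : A} {i : ℕ} {b b' : B} (h : TT S a i b)
    (h' : TT S a i b') : b = b' := by
  obtain ⟨hi, h⟩ := h
  obtain ⟨hi', h'⟩ := h'
  have := hS.1.2.1 _ h _ h' rfl
  simpa using this

lemma tt_inj (hS : IsStable (starSys I) S) {a a' : A} {i i' : ℕ} {b : B} (h : TT S a i b)
    (h' : TT S a' i' b) : a = a' ∧ i = i' := by
  obtain ⟨hi, h⟩ := h
  obtain ⟨hi', h'⟩ := h'
  have := hS.1.2.2 _ h _ h' rfl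
  simpa using this

lemma tt_edge (hS : IsStable (starSys I) S) {a : A} {i : ℕ} {b : B} (h : TT S a i b) :
    I.E a b := by
  obtain ⟨hi, h⟩ := h
  exact hS.1.1 _ h

lemma matched_cases (hS : IsStable (starSys I) S) {a : A} {i : ℕ} {hi : i < Fintype.card A}
    (h : matchedA S (a, ⟨i, hi⟩)) : (∃ b, TT S a i b) ∨ ∃ j, DD S a i j := by
  obtain ⟨w, hw⟩ := h
  rcases w with b | ⟨a', j⟩
  · exact Or.inl ⟨b, hi, hw⟩
  · obtain ⟨h1, he⟩ := hS.1.1 _ hw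
    change a = a' at h1
    subst h1
    exact Or.inr ⟨j, hi, j.2, hw⟩

lemma dd_step (hS : IsStable (starSys I) S) {a : A} {k : ℕ} (h : DD S a (k+1) k) :
    (∃ b, TT S a k b) ∨ ∃ j, DD S a k j := by
  have h0 := h
  obtain ⟨hi, hj, h⟩ := h
  by_contra hc
  have hk : k < Fintype.card A := by omega
  have hum : ¬ matchedA S (a, ⟨k, hk⟩) := fun hm => hc (matched_cases hS hm)
  refine hS.2 (a, ⟨k, hk⟩) (Sum.inr (a, ⟨k, hj⟩)) ⟨⟨rfl, Or.inl rfl⟩, ?_, Or.inl hum, Or.inr ?_⟩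
  · intro hm; exact hum ⟨_, hm⟩
  · exact ⟨_, h, rfl, rfl, rfl, rfl⟩

lemma b_level (hS : IsStable (starSys I) S) {a : A} {b : B} {k : ℕ} (hE : I.E a b)
    (hk : k < Fintype.card A)
    (h : DD S a k k ∨ (¬ (∃ b, TT S a k b) ∧ ¬ ∃ j, DD S a k j)) :
    ∃ a' j, TT S a' j b ∧ k ≤ j := by
  by_contra hc
  push Not at hc
  refine hS.2 (a, ⟨k, hk⟩) (Sum.inl b) ⟨hE, ?_, ?_, ?_⟩
  · intro hm; exact absurd (hc a k ⟨hk, hm⟩) (lt_irrefl _)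
  · rcases h with ⟨hi, hj, h⟩ | ⟨h1, h2⟩
    · exact Or.inr ⟨_, h, rfl, rfl⟩
    · exact Or.inl fun hm => (matched_cases hS hm).elim h1 h2
  · by_cases hm : matchedB S (Sum.inl b : BStar A B)
    · obtain ⟨⟨a', i⟩, hw⟩ := hm
      exact Or.inr ⟨_, hw, Or.inl (hc a' i ⟨i.2, hw⟩)⟩
    · exact Or.inl hm

lemma dd_up (hS : IsStable (starSys I) S) {a : A} {b : B} {i : ℕ} (h : TT S a i b) (m : ℕ)
    (hm : i + m + 1 < Fintype.card A) : DD S a (i+m+1) (i+m) := by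
  induction m with
  | zero => exact (dd_dummy hS hm).resolve_left fun hd => dd_tt hS hd h
  | succ m ih =>
    have ih := ih (by omega)
    refine (dd_dummy hS hm).resolve_left fun hd => ?_
    have := dd_fun hS ih hd
    omega

lemma tt_level (hS : IsStable (starSys I) S) {a : A} {b b' : B} {i i' : ℕ} (h : TT S a i b)
    (h' : TT S a i' b') : i = i' := by
  rcases lt_trichotomy i i' with hl | hl | hl
  · obtain ⟨m, rfl⟩ := Nat.exists_eq_add_of_lt hl
    exact (dd_tt hS (dd_up hS h m h'.1) h').elim
  · exact hl
  · obtain ⟨m, rfl⟩ := Nat.exists_eq_add_of_lt hl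
    exact (dd_tt hS (dd_up hS h' m h.1) h).elim

lemma dd_down (hS : IsStable (starSys I) S) {a : A} {b : B} {l : ℕ} (h : TT S a (l+1) b) :
    DD S a l l :=
  (dd_dummy hS h.1).resolve_right fun hd => dd_tt hS hd h

lemma dd_un (hS : IsStable (starSys I) S) {a : A} (h : ∀ i b, ¬ TT S a i b) (k : ℕ)
    (hk : k + 1 < Fintype.card A) : DD S a k k := by
  induction k with
  | zero =>
    refine (dd_dummy hS hk).resolve_right fun hd => ?_
    rcases dd_step hS hd with ⟨b, hb⟩ | ⟨j, hj⟩
    · exact h _ _ hb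
    · have h1 := DD_edge hS hj
      have : j = 0 := by omega
      subst this
      have := dd_inj hS hj hd
      omega
  | succ k ih =>
    have ih := ih (by omega)
    refine (dd_dummy hS hk).resolve_right fun hd => ?_
    rcases dd_step hS hd with ⟨b, hb⟩ | ⟨j, hj⟩
    · exact h _ _ hb
    · rcases DD_edge hS hj with rfl | h1
      · have := dd_inj hS hj hd
        omega
      · obtain rfl : k = j := by omega
        have := dd_inj hS hj ih
        omega

lemma b_level_un (hS : IsStable (starSys I) S) {a : A} {b : B} (hE : I.E a b)
    (h : ∀ i b, ¬ TT S a i b) : ∃ a' j, TT S a' j b ∧ Fintype.card A ≤ j + 1 := by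
  have hpos : 0 < Fintype.card A := Fintype.card_pos_iff.2 ⟨a⟩
  obtain ⟨n, hn⟩ : ∃ n, Fintype.card A = n + 1 := ⟨Fintype.card A - 1, by omega⟩
  have hno : ¬ ∃ j, DD S a n j := by
    rintro ⟨j, hj⟩
    have hj2 := hj.2.1
    rcases DD_edge hS hj with rfl | h1
    · omega
    · have := dd_inj hS (dd_un hS h j (by omega)) hj
      omega
  obtain ⟨a', j, h1, h2⟩ := b_level hS hE (k := n) (by omega)
    (Or.inr ⟨fun ⟨b, hb⟩ => h _ _ hb, hno⟩)
  exact ⟨a', j, h1, by omega⟩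

lemma mem_proj [Fintype B] {a : A} {b : B} : (a, b) ∈ proj S ↔ ∃ i, TT S a i b := by
  simp only [proj, TT, Finset.mem_filter, Finset.mem_univ, true_and]
  exact ⟨fun ⟨i, h⟩ => ⟨i, i.2, h⟩, fun ⟨i, hi, h⟩ => ⟨⟨i, hi⟩, h⟩⟩

end aux

/-- If `S` is a stable matching in `G*`, then `S'` is a maximum
matching in `G`. -/
theorem stmt9 {A B : Type*} [Fintype A] [Fintype B] [DecidableEq A] [DecidableEq B]
    (I : PrefSys A B) (hI : I.IsValid)
    (S : Finset (AStar A × BStar A B)) (hS : IsStable (starSys I) S) :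
    IsMaximumMatching I (proj S) := by
  have hM : IsMatching I (proj S) := by
    refine ⟨?_, ?_, ?_⟩
    · rintro ⟨a, b⟩ h
      obtain ⟨i, h⟩ := mem_proj.1 h
      exact tt_edge hS h
    · rintro ⟨a, b⟩ h ⟨a', b'⟩ h' (rfl : a = a')
      obtain ⟨i, h⟩ := mem_proj.1 h
      obtain ⟨i', h'⟩ := mem_proj.1 h'
      obtain rfl := tt_level hS h h'
      rw [tt_fun hS h h']
    · rintro ⟨a, b⟩ h ⟨a', b'⟩ h' (rfl : b = b')
      obtain ⟨i, h⟩ := mem_proj.1 h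
      obtain ⟨i', h'⟩ := mem_proj.1 h'
      rw [(tt_inj hS h h').1]
  refine ⟨hM, fun N hN => ?_⟩
  by_cases hall : ∀ a, ∃ i b, TT S a i b
  · refine Finset.card_le_card_of_forall_subsingleton (fun p m => p.1 = m.1) ?_ ?_
    · rintro ⟨a, b⟩ _
      obtain ⟨i, b', h⟩ := hall a
      exact ⟨(a, b'), mem_proj.2 ⟨i, h⟩, rfl⟩
    · rintro m _ p ⟨hp, hpm⟩ q ⟨hq, hqm⟩
      exact hN.2.1 _ hp _ hq (hpm.trans hqm.symm)
  · push Not at hall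
    obtain ⟨a0, ha0⟩ := hall
    obtain ⟨t, ht, hgap⟩ : ∃ t, t < Fintype.card A ∧ ∀ a b, ¬ TT S a t b := by
      by_contra hc
      push Not at hc
      choose f g hfg using fun i : Fin (Fintype.card A) => hc i i.2
      have hinj : Function.Injective f := by
        intro i j hij
        have h1 := hfg i
        rw [hij] at h1
        exact Fin.ext (tt_level hS h1 (hfg j))
      have hsurj := ((Fintype.bijective_iff_injective_and_card f).2 ⟨hinj, by simp⟩).2
      obtain ⟨i, hi⟩ := hsurj a0
      exact ha0 i (g i) (hi ▸ hfg i)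
    refine Finset.card_le_card_of_forall_subsingleton
      (fun p m => ∃ l, TT S m.1 l m.2 ∧ ((p.1 = m.1 ∧ l < t) ∨ (p.2 = m.2 ∧ t < l))) ?_ ?_
    · rintro ⟨a, b⟩ hab
      have hE := hN.1 _ hab
      have key : (∃ l b', TT S a l b' ∧ l < t) ∨ ∃ l a', TT S a' l b ∧ t ≤ l := by
        by_cases hm : ∃ l b', TT S a l b'
        · obtain ⟨l, b', h⟩ := hm
          by_cases hl : l < t
          · exact Or.inl ⟨l, b', h, hl⟩
          · have hne : l ≠ t := fun e => hgap a b' (e ▸ h)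
            obtain ⟨k, rfl⟩ : ∃ k, l = k + 1 := ⟨l - 1, by omega⟩
            obtain ⟨a', j, h1, h2⟩ := b_level hS hE (k := k) (by have := h.1; omega)
              (Or.inl (dd_down hS h))
            exact Or.inr ⟨j, a', h1, by omega⟩
        · push Not at hm
          obtain ⟨a', j, h1, h2⟩ := b_level_un hS hE hm
          exact Or.inr ⟨j, a', h1, by omega⟩
      rcases key with ⟨l, b', h, hl⟩ | ⟨l, a', h, hl⟩
      · exact ⟨(a, b'), mem_proj.2 ⟨l, h⟩, l, h, Or.inl ⟨rfl, hl⟩⟩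
      · have hne : l ≠ t := fun e => hgap a' b (e ▸ h)
        exact ⟨(a', b), mem_proj.2 ⟨l, h⟩, l, h, Or.inr ⟨rfl, by omega⟩⟩
    · rintro m _ p ⟨hp, l, hl, hpm⟩ q ⟨hq, l', hl', hqm⟩
      obtain rfl := tt_level hS hl hl'
      rcases hpm with ⟨h1, h2⟩ | ⟨h1, h2⟩ <;> rcases hqm with ⟨h3, h4⟩ | ⟨h3, h4⟩
      · exact hN.2.1 _ hp _ hq (h1.trans h3.symm)
      · omega
      · omega
      · exact hN.2.2 _ hp _ hq (h1.trans h3.symm)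

end PopMax
end
end

section
/- Let S be a stable matching in G*. Then for every a ∈ A, each of the nodes a_0, …, a_{n0−2} and d_1(a), …, d_{n0−1}(a) is matched in S, and at most one node among a_0, …, a_{n0−1} is matched in S to a neighbor in B̃. Consequently, S' is a matching in G. -/
open Classical

noncomputable section

namespace PopMax

variable {A B : Type*}

theorem mem_proj_exists {A B : Type*} [Fintype A] [Fintype B]
    {S : Finset (AStar A × BStar A B)} {p : A × B} (h : p ∈ proj S) :
    ∃ i : Fin (Fintype.card A), ((p.1, i), (Sum.inl p.2 : BStar A B)) ∈ S :=
  (Finset.mem_filter.1 h).2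

/-- For a stable matching `S` in `G*` and every `a ∈ A`: each of the
nodes `a_0, …, a_{n0−2}` and each dummy node `d_1(a), …, d_{n0−1}(a)` is matched in `S`,
and at most one node among `a_0, …, a_{n0−1}` is matched in `S` to a neighbor in `B̃`.
Consequently `S'` is a matching in `G`. -/
theorem stmt10 {A B : Type*} [Fintype A] [Fintype B] [DecidableEq A] [DecidableEq B]
    (I : PrefSys A B) (hI : I.IsValid)
    (S : Finset (AStar A × BStar A B)) (hS : IsStable (starSys I) S) :
    (∀ (a : A) (i : Fin (Fintype.card A)), (i : ℕ) + 1 < Fintype.card A →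
        ∃ w : BStar A B, (((a, i) : AStar A), w) ∈ S) ∧
    (∀ (a : A) (j : Fin (Fintype.card A - 1)),
        ∃ x : AStar A, (x, (Sum.inr (a, j) : BStar A B)) ∈ S) ∧
    (∀ (a : A) (i i' : Fin (Fintype.card A)) (b b' : B),
        (((a, i) : AStar A), (Sum.inl b : BStar A B)) ∈ S →
        (((a, i') : AStar A), (Sum.inl b' : BStar A B)) ∈ S → i = i') ∧
    IsMatching I (proj S) := by
  obtain ⟨⟨hE, h1, h2⟩, hst⟩ := hS
  have hB : ∀ (a : A) (j : Fin (Fintype.card A - 1)),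
      ∃ x : AStar A, (x, (Sum.inr (a, j) : BStar A B)) ∈ S := by
    intro a j
    by_contra hno
    have hj := j.2
    have hlt : (j : ℕ) + 1 < Fintype.card A := by omega
    apply hst (a, ⟨(j : ℕ) + 1, hlt⟩) (Sum.inr (a, j))
    refine ⟨⟨rfl, Or.inr rfl⟩, fun h => hno ⟨_, h⟩, ?_, Or.inl hno⟩
    by_cases hm : matchedA S ((a, ⟨(j : ℕ) + 1, hlt⟩) : AStar A)
    · right
      obtain ⟨w, hw⟩ := hm
      refine ⟨w, hw, ?_⟩
      rcases w with b | ⟨a', j'⟩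
      · exact ⟨rfl, rfl⟩
      · have he := hE _ hw
        obtain ⟨rfl, he⟩ : a = a' ∧ ((j : ℕ) + 1 = (j' : ℕ) ∨ (j : ℕ) + 1 = (j' : ℕ) + 1) := he
        rcases he with he | he
        · exact ⟨rfl, rfl, rfl, he.symm⟩
        · have : j = j' := Fin.ext (by omega)
          subst this
          exact absurd ⟨_, hw⟩ hno
    · exact Or.inl hm
  have key : ∀ (a : A) (i : Fin (Fintype.card A)) (b : B),
      (((a, i) : AStar A), (Sum.inl b : BStar A B)) ∈ S →
      ∀ (k : ℕ) (hk : (i : ℕ) + k + 1 < Fintype.card A),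
        (((a, ⟨(i : ℕ) + k + 1, hk⟩) : AStar A),
          (Sum.inr (a, ⟨(i : ℕ) + k, by omega⟩) : BStar A B)) ∈ S := by
    intro a i b hb k
    induction k with
    | zero =>
      intro hk
      obtain ⟨⟨a', i'⟩, hx⟩ := hB a ⟨(i : ℕ) + 0, by omega⟩
      have he := hE _ hx
      obtain ⟨rfl, he⟩ : a' = a ∧ ((i' : ℕ) = (i : ℕ) + 0 ∨ (i' : ℕ) = (i : ℕ) + 0 + 1) := he
      rcases he with he | he
      · have : i' = i := Fin.ext (by omega)
        subst this
        have := h1 _ hb _ hx rfl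
        simp at this
      · have : i' = ⟨(i : ℕ) + 0 + 1, hk⟩ := Fin.ext he
        subst this
        exact hx
    | succ k ih =>
      intro hk
      have ih' := ih (by omega)
      obtain ⟨⟨a', i'⟩, hx⟩ := hB a ⟨(i : ℕ) + (k + 1), by omega⟩
      have he := hE _ hx
      obtain ⟨rfl, he⟩ : a' = a ∧
        ((i' : ℕ) = (i : ℕ) + (k + 1) ∨ (i' : ℕ) = (i : ℕ) + (k + 1) + 1) := he
      rcases he with he | he
      · have : i' = ⟨(i : ℕ) + k + 1, by omega⟩ := Fin.ext he
        rw [this] at hx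
        have := h1 _ ih' _ hx rfl
        simp at this
      · have : i' = ⟨(i : ℕ) + (k + 1) + 1, hk⟩ := Fin.ext he
        subst this
        exact hx
  have nolt : ∀ (a : A) (i i' : Fin (Fintype.card A)) (b b' : B),
        (((a, i) : AStar A), (Sum.inl b : BStar A B)) ∈ S →
        (((a, i') : AStar A), (Sum.inl b' : BStar A B)) ∈ S → ¬ (i : ℕ) < (i' : ℕ) := by
    intro a i i' b b' hb hb' hlt
    have hi' := i'.2
    obtain ⟨k, hk⟩ := Nat.exists_eq_add_of_lt hlt
    have hx := key a i b hb k (by omega)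
    have : i' = ⟨(i : ℕ) + k + 1, by omega⟩ := Fin.ext hk
    rw [this] at hb'
    have := h1 _ hb' _ hx rfl
    simp at this
  have huniq : ∀ (a : A) (i i' : Fin (Fintype.card A)) (b b' : B),
        (((a, i) : AStar A), (Sum.inl b : BStar A B)) ∈ S →
        (((a, i') : AStar A), (Sum.inl b' : BStar A B)) ∈ S → i = i' := by
    intro a i i' b b' hb hb'
    have := nolt a i i' b b' hb hb'
    have := nolt a i' i b' b hb' hb
    exact Fin.ext (by omega)
  refine ⟨?_, hB, huniq, ?_, ?_, ?_⟩
  · intro a i hi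
    by_contra hno
    apply hst (a, i) (Sum.inr (a, ⟨(i : ℕ), by omega⟩))
    refine ⟨⟨rfl, Or.inl rfl⟩, fun h => hno ⟨_, h⟩, Or.inl hno, ?_⟩
    obtain ⟨⟨a', i'⟩, hx⟩ := hB a ⟨(i : ℕ), by omega⟩
    right
    refine ⟨_, hx, ?_⟩
    have he := hE _ hx
    obtain ⟨rfl, he⟩ : a' = a ∧ ((i' : ℕ) = (i : ℕ) ∨ (i' : ℕ) = (i : ℕ) + 1) := he
    rcases he with he | he
    · have : i' = i := Fin.ext he
      subst this
      exact absurd ⟨_, hx⟩ hno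
    · exact ⟨rfl, rfl, rfl, he⟩
  · rintro ⟨a, b⟩ hp
    obtain ⟨i, hi⟩ := mem_proj_exists hp
    exact hE _ hi
  · rintro ⟨a, b⟩ hp ⟨a', b'⟩ hq hab
    obtain ⟨i, hi⟩ := mem_proj_exists hp
    obtain ⟨i', hi'⟩ := mem_proj_exists hq
    dsimp only at hab hi hi'
    subst hab
    have := huniq a i i' b b' hi hi'
    subst this
    have := h1 _ hi _ hi' rfl
    simp at this
    rw [this]
  · rintro ⟨a, b⟩ hp ⟨a', b'⟩ hq hab
    obtain ⟨i, hi⟩ := mem_proj_exists hp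
    obtain ⟨i', hi'⟩ := mem_proj_exists hq
    dsimp only at hab hi hi'
    subst hab
    have := h2 _ hi _ hi' rfl
    simp at this
    rw [this.1]

end PopMax
end
end

section
/- Suppose |A| = |B| = n0 and M is a popular perfect matching in G, i.e., a perfect matching with Δ(M,N) ≥ 0 for every perfect matching N in G. Then there exists α : A ∪ B → ℤ such that α_a + α_b ≥ wt_M(a,b) for every edge (a,b) ∈ E, α_a + α_b = 0 for every edge (a,b) ∈ M, α_a ∈ {0, −2, −4, …, −2(n0−1)} for every a ∈ A, and α_b ∈ {0, 2, 4, …, 2(n0−1)} for every b ∈ B; in particular Σ_{u ∈ A∪B} α_u = 0. -/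
open Classical

noncomputable section

namespace PopMax

variable {A B : Type*}

/-- Weight of a walk given as a list of nodes. -/
def lw {V : Type*} (c : V → V → ℤ) : List V → ℤ
  | [] => 0
  | [_] => 0
  | x :: y :: l => c x y + lw c (y :: l)

theorem lw_split {V : Type*} (c : V → V → ℤ) (a : V) (l2 : List V) :
    ∀ l1 : List V, lw c (l1 ++ a :: l2) = lw c (l1 ++ [a]) + lw c (a :: l2)
  | [] => by simp [lw]
  | [x] => by simp [lw]
  | x :: y :: l => by
      have := lw_split c a l2 (y :: l)
      simp only [List.cons_append, lw] at this ⊢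
      rw [this]; ring

theorem lw_le {V : Type*} (c : V → V → ℤ) (hc : ∀ a b, c a b ≤ 1) :
    ∀ (l : List V) (x : V), lw c (x :: l) ≤ l.length
  | [], x => by simp [lw]
  | y :: l, x => by
      have := lw_le c hc l y
      have := hc x y
      simp only [lw, List.length_cons]
      push_cast
      linarith

theorem cyc {V : Type*} [Fintype V] [DecidableEq V] (c : V → V → ℤ) (R : V → V → Prop)
    (hR : ∀ a, R a a) (hc0 : ∀ a, c a a = 0) :
    ∀ (l : List V) (x : V), (x :: l).Nodup → (x :: l).IsChain R →
      (∀ a, a ≠ (x :: l).getLast (by simp) → R a ((x :: l).formPerm a)) ∧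
      ∑ a, c a ((x :: l).formPerm a) = lw c (x :: l) + c ((x :: l).getLast (by simp)) x
  | [], x => by
      intro _ _
      simp [lw, hR, hc0]
  | y :: l, x => by
      intro hn hch
      have hn' : (y :: l).Nodup := (List.nodup_cons.1 hn).2
      have hx : x ∉ y :: l := (List.nodup_cons.1 hn).1
      rw [List.isChain_cons_cons] at hch
      obtain ⟨h1, h2⟩ := cyc c R hR hc0 l y hn' hch.2
      have hlast : (x :: y :: l).getLast (by simp) = (y :: l).getLast (by simp) := by simp
      rw [hlast]
      set z := (y :: l).getLast (by simp) with hz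
      have hzm : z ∈ y :: l := List.getLast_mem _
      have hzx : z ≠ x := fun h => hx (h ▸ hzm)
      have hyx : y ≠ x := fun h => hx (h ▸ List.mem_cons_self)
      have sz : (y :: l).formPerm z = y := List.formPerm_apply_getLast y l
      have sx : (y :: l).formPerm x = x := List.formPerm_apply_of_notMem hx
      have ht : ∀ a, (x :: y :: l).formPerm a = Equiv.swap x y ((y :: l).formPerm a) := by
        intro a; rw [List.formPerm_cons_cons]; rfl
      have tfix : ∀ a, a ≠ x → a ≠ z → (x :: y :: l).formPerm a = (y :: l).formPerm a := by
        intro a hax haz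
        rw [ht]
        apply Equiv.swap_apply_of_ne_of_ne
        · intro h; exact hax ((y :: l).formPerm.injective (h.trans sx.symm))
        · intro h; exact haz ((y :: l).formPerm.injective (h.trans sz.symm))
      have tx : (x :: y :: l).formPerm x = y := by rw [ht, sx]; simp
      have tz : (x :: y :: l).formPerm z = x := by rw [ht, sz]; simp
      constructor
      · intro a ha
        by_cases hax : a = x
        · rw [hax, tx]; exact hch.1
        · rw [tfix a hax ha]; exact h1 a ha
      · have key : ∑ a, (c a ((x :: y :: l).formPerm a) - c a ((y :: l).formPerm a))
            = ∑ a ∈ ({x, z} : Finset V),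
              (c a ((x :: y :: l).formPerm a) - c a ((y :: l).formPerm a)) := by
          symm
          apply Finset.sum_subset (Finset.subset_univ _)
          intro a _ ha
          simp only [Finset.mem_insert, Finset.mem_singleton, not_or] at ha
          rw [tfix a ha.1 ha.2]; ring
        rw [Finset.sum_pair hzx.symm, Finset.sum_sub_distrib, h2, tx, tz, sx, sz, hc0] at key
        simp only [lw]
        linarith

theorem potential {V : Type*} [Fintype V] [DecidableEq V] (c : V → V → ℤ) (R : V → V → Prop)
    (hR : ∀ a, R a a) (hc0 : ∀ a, c a a = 0) (hc : ∀ a b, c a b ≤ 1)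
    (h : ∀ σ : Equiv.Perm V, (∀ a, R a (σ a)) → ∑ a, c a (σ a) ≤ 0) :
    ∃ q : V → ℤ, ∀ a, 0 ≤ q a ∧ q a ≤ (Fintype.card V : ℤ) - 1 ∧
      ∀ a', R a a' → c a a' + q a' ≤ q a := by
  let P : V → ℤ → Prop := fun a z =>
    ∃ l : List V, (a :: l).Nodup ∧ (a :: l).IsChain R ∧ lw c (a :: l) = z
  have hb : ∀ a z, P a z → z ≤ (Fintype.card V : ℤ) - 1 := by
    rintro a z ⟨l, hn, -, rfl⟩
    have h1 := lw_le c hc l a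
    have h2 := hn.length_le_card
    simp only [List.length_cons] at h2
    have : (l.length : ℤ) + 1 ≤ Fintype.card V := by exact_mod_cast h2
    linarith
  have hz : ∀ a, P a 0 := fun a => ⟨[], by simp, by simp, rfl⟩
  have hm : ∀ a, ∃ ub, P a ub ∧ ∀ z, P a z → z ≤ ub := fun a =>
    Int.exists_greatest_of_bdd ⟨_, hb a⟩ ⟨0, hz a⟩
  choose q hq hmax using hm
  refine ⟨q, fun a => ⟨hmax a 0 (hz a), hb a _ (hq a), ?_⟩⟩
  intro a' haa
  obtain ⟨l, hn, hch, hl⟩ := hq a'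
  by_cases hmem : a ∈ a' :: l
  · obtain ⟨l1, l2, he⟩ := List.append_of_mem hmem
    have hsplit := lw_split c a l2 l1
    rw [← he, hl] at hsplit
    have hn2 := hn
    have hch2 := hch
    rw [he] at hn2 hch2
    have h2 : lw c (a :: l2) ≤ q a :=
      hmax a _ ⟨l2, (List.nodup_append.1 hn2).2.1, (List.isChain_append.1 hch2).2.1, rfl⟩
    have h3 : l1 ++ a :: l2 = (l1 ++ [a]) ++ l2 := by simp
    rw [h3] at hn2 hch2
    have n1 := (List.nodup_append.1 hn2).1
    have c1 := (List.isChain_append.1 hch2).1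
    obtain ⟨t, ht⟩ : ∃ t, l1 ++ [a] = a' :: t := by
      cases l1 with
      | nil => simp at he; exact ⟨[], by simp [he.1]⟩
      | cons u v => simp at he; exact ⟨v ++ [a], by simp [he.1]⟩
    have hlast : (a' :: t).getLast (by simp) = a := by
      simp only [← ht]; simp
    rw [ht] at n1 c1 hsplit
    obtain ⟨g1, g2⟩ := cyc c R hR hc0 t a' n1 c1
    have g3 := h (a' :: t).formPerm (by
      intro u
      by_cases hu : u = (a' :: t).getLast (by simp)
      · rw [hu, List.formPerm_apply_getLast, hlast]; exact haa
      · exact g1 u hu)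
    rw [g2, hlast] at g3
    linarith
  · refine hmax a _ ⟨a' :: l, List.nodup_cons.2 ⟨hmem, hn⟩, ?_, ?_⟩
    · rw [List.isChain_cons_cons]; exact ⟨haa, hch⟩
    · simp only [lw]; rw [hl]

/-- If `|A| = |B| = n0` and `M` is a popular perfect matching in `G`,
then there is a dual certificate `α : A ∪ B → ℤ` with `α_a + α_b ≥ wt_M(a,b)` on every
edge, `α_a + α_b = 0` on matching edges, `α_a ∈ {0, −2, …, −2(n0−1)}` for `a ∈ A`,
`α_b ∈ {0, 2, …, 2(n0−1)}` for `b ∈ B`, and `Σ_u α_u = 0`. -/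
theorem stmt11 {A B : Type*} [Fintype A] [Fintype B] [DecidableEq A] [DecidableEq B]
    (I : PrefSys A B) (hI : I.IsValid) (n0 : ℕ)
    (hA : Fintype.card A = n0) (hB : Fintype.card B = n0)
    (M : Finset (A × B)) (hM : IsPerfectMatching I M)
    (hpop : ∀ N : Finset (A × B), IsPerfectMatching I N → 0 ≤ Delta I M N) :
    ∃ α : A ⊕ B → ℤ,
      (∀ a b, I.E a b → wt I M a b ≤ α (Sum.inl a) + α (Sum.inr b)) ∧
      (∀ a b, (a, b) ∈ M → α (Sum.inl a) + α (Sum.inr b) = 0) ∧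
      (∀ a : A, ∃ k : ℕ, k ≤ n0 - 1 ∧ α (Sum.inl a) = -(2 * (k : ℤ))) ∧
      (∀ b : B, ∃ k : ℕ, k ≤ n0 - 1 ∧ α (Sum.inr b) = 2 * (k : ℤ)) ∧
      (∑ u : A ⊕ B, α u = 0) := by
  obtain ⟨irA, trA, toA, irB, trB, toB⟩ := hI
  obtain ⟨⟨hE, hM1, hM2⟩, hmA, hmB⟩ := hM
  choose f hf using hmA
  choose g hg using hmB
  have fu : ∀ a b, (a, b) ∈ M → b = f a := fun a b hab =>
    (Prod.ext_iff.1 (hM1 _ hab _ (hf a) rfl)).2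
  have gu : ∀ a b, (a, b) ∈ M → a = g b := fun a b hab =>
    (Prod.ext_iff.1 (hM2 _ hab _ (hg b) rfl)).1
  have gf : ∀ a, g (f a) = a := fun a => (gu _ _ (hf a)).symm
  have fg : ∀ b, f (g b) = b := fun b => (fu _ _ (hg b)).symm
  let m : A ≃ B := ⟨f, g, gf, fg⟩
  have memM : ∀ a b, (a, b) ∈ M ↔ b = f a := fun a b => ⟨fu a b, fun h => h ▸ hf a⟩
  have memM' : ∀ a b, (a, b) ∈ M ↔ a = g b := fun a b => ⟨gu a b, fun h => h ▸ hg b⟩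
  let vA : A → B → ℤ := fun a b =>
    (if I.prefA a b (f a) then 1 else 0) - (if I.prefA a (f a) b then 1 else 0)
  let vB : A → B → ℤ := fun a b =>
    (if I.prefB b a (g b) then 1 else 0) - (if I.prefB b (g b) a then 1 else 0)
  have asA : ∀ a b b', I.prefA a b b' → ¬ I.prefA a b' b := fun a b b' h h' =>
    irA a b (trA a b b' b h h')
  have asB : ∀ b a a', I.prefB b a a' → ¬ I.prefB b a' a := fun b a a' h h' =>
    irB b a (trB b a a' a h h')
  have blk : ∀ a b, I.E a b → (Blocks I M a b ↔ I.prefA a b (f a) ∧ I.prefB b a (g b)) := by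
    intro a b hab
    constructor
    · rintro ⟨-, -, h1, h2⟩
      constructor
      · rcases h1 with h1 | ⟨b', h1, h3⟩
        · exact absurd ⟨_, hf a⟩ h1
        · rwa [fu _ _ h1] at h3
      · rcases h2 with h2 | ⟨b', h2, h3⟩
        · exact absurd ⟨_, hg b⟩ h2
        · rwa [gu _ _ h2] at h3
    · rintro ⟨h1, h2⟩
      refine ⟨hab, ?_, Or.inr ⟨_, hf a, h1⟩, Or.inr ⟨_, hg b, h2⟩⟩
      intro h
      rw [fu _ _ h] at h1
      exact irA _ _ h1
  have neg : ∀ a b, ((∃ b', (a, b') ∈ M ∧ I.prefA a b' b) ∧ (∃ a', (a', b) ∈ M ∧ I.prefB b a' a))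
      ↔ (I.prefA a (f a) b ∧ I.prefB b (g b) a) := by
    intro a b
    simp only [memM a, memM' _ b, exists_eq_left]
  have hwt : ∀ a b, I.E a b → wt I M a b = vA a b + vB a b := by
    intro a b hab
    simp only [wt, blk a b hab, neg, vA, vB]
    by_cases hb : b = f a
    · subst hb
      simp [gf, irA, irB]
    · have h1 := toA a b (f a) hab (hE _ (hf a)) hb
      have h2 := toB b a (g b) hab (hE _ (hg b)) (fun h => hb (by rw [h, fg]))
      rcases h1 with h1 | h1 <;> rcases h2 with h2 | h2 <;>
        simp [h1, h2, asA _ _ _ h1, asB _ _ _ h2]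
  have hev : ∀ a b, I.E a b → ∃ k : ℤ, wt I M a b = 2 * k ∧ k ≤ 1 := by
    intro a b _
    unfold wt
    split_ifs
    · exact ⟨1, by norm_num, by norm_num⟩
    · exact ⟨-1, by norm_num, by norm_num⟩
    · exact ⟨0, by norm_num, by norm_num⟩
  let c : A → A → ℤ := fun a a' => wt I M a (f a') / 2
  have hc2 : ∀ a a', wt I M a (f a') = 2 * c a a' := by
    intro a a'
    simp only [c, wt]
    split_ifs <;> norm_num
  have hc1 : ∀ a a', c a a' ≤ 1 := by
    intro a a'
    simp only [c, wt]
    split_ifs <;> norm_num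
  have hc0 : ∀ a, c a a = 0 := by
    intro a
    have h1 := hc2 a a
    rw [hwt a (f a) (hE _ (hf a))] at h1
    simp [vA, vB, gf, irA, irB] at h1
    exact h1
  obtain ⟨q, hq⟩ := potential c (fun a a' => I.E a (f a')) (fun a => hE _ (hf a)) hc0 hc1 (by
    intro σ hσ
    let N : Finset (A × B) := Finset.univ.image (fun a => (a, f (σ a)))
    have memN : ∀ a b, (a, b) ∈ N ↔ b = f (σ a) := by
      intro a b
      simp only [N, Finset.mem_image, Finset.mem_univ, true_and, Prod.mk.injEq]
      constructor
      · rintro ⟨x, rfl, rfl⟩; rfl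
      · rintro rfl; exact ⟨a, rfl, rfl⟩
    have memN' : ∀ a b, (a, b) ∈ N ↔ a = σ.symm (g b) := by
      intro a b
      rw [memN]
      constructor
      · rintro rfl; simp [gf]
      · rintro rfl; simp [fg]
    have hN : IsPerfectMatching I N := by
      refine ⟨⟨?_, ?_, ?_⟩, ?_, ?_⟩
      · rintro ⟨a, b⟩ h
        rw [memN] at h
        subst h
        exact hσ a
      · rintro ⟨a, b⟩ h ⟨a', b'⟩ h' (rfl : a = a')
        rw [memN] at h h'
        rw [h, h']
      · rintro ⟨a, b⟩ h ⟨a', b'⟩ h' (rfl : b = b')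
        rw [memN'] at h h'
        rw [h, h']
      · intro a; exact ⟨_, (memN _ _).2 rfl⟩
      · intro b; exact ⟨_, (memN' _ _).2 rfl⟩
    have hD := hpop N hN
    have nA : ∀ a, matchedA N a := hN.2.1
    have nB : ∀ b, matchedB N b := hN.2.2
    have mA : ∀ a, matchedA M a := fun a => ⟨_, hf a⟩
    have mB : ∀ b, matchedB M b := fun b => ⟨_, hg b⟩
    have p1 : ∀ a, prefersA I a M N ↔ I.prefA a (f a) (f (σ a)) := by
      intro a
      simp [prefersA, nA, memM, memN]
    have p2 : ∀ a, prefersA I a N M ↔ I.prefA a (f (σ a)) (f a) := by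
      intro a
      simp [prefersA, mA, memM, memN]
    have p3 : ∀ b, prefersB I b M N ↔ I.prefB b (g b) (σ.symm (g b)) := by
      intro b
      simp only [prefersB, nB, memM', memN', exists_eq_left, not_true_eq_false, false_or]
    have p4 : ∀ b, prefersB I b N M ↔ I.prefB b (σ.symm (g b)) (g b) := by
      intro b
      simp only [prefersB, mB, memM', memN', exists_eq_left, not_true_eq_false, false_or]
    have hDel : Delta I M N = - ∑ a, wt I M a (f (σ a)) := by
      have e1 : ∑ a, wt I M a (f (σ a)) = ∑ a, vA a (f (σ a)) + ∑ a, vB a (f (σ a)) := by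
        rw [← Finset.sum_add_distrib]
        exact Finset.sum_congr rfl fun a _ => hwt _ _ (hσ a)
      have e2 : ∑ a, vB a (f (σ a)) = ∑ b, vB (σ.symm (g b)) b := by
        apply Fintype.sum_equiv (σ.trans m)
        intro a
        simp [m, gf]
      rw [e1, e2]
      unfold Delta phi
      simp only [Finset.card_filter, Fintype.sum_sum_type, prefers, p1, p2, p3, p4, vA, vB,
        Finset.sum_sub_distrib]
      push_cast
      ring
    have : ∑ a, wt I M a (f (σ a)) = 2 * ∑ a, c a (σ a) := by
      rw [Finset.mul_sum]
      exact Finset.sum_congr rfl fun a _ => hc2 _ _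
    rw [hDel, this] at hD
    linarith)
  have hk : ∀ a, ∃ k : ℕ, k ≤ n0 - 1 ∧ (n0 : ℤ) - 1 - q a = k := by
    intro a
    obtain ⟨h0, h1, -⟩ := hq a
    rw [hA] at h1
    exact ⟨((n0 : ℤ) - 1 - q a).toNat, by omega, by omega⟩
  refine ⟨Sum.elim (fun a => -(2 * ((n0 : ℤ) - 1 - q a))) (fun b => 2 * ((n0 : ℤ) - 1 - q (g b))),
    ?_, ?_, ?_, ?_, ?_⟩
  · intro a b hab
    have h1 := (hq a).2.2 (g b) (by simpa [fg] using hab)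
    have h2 := hc2 a (g b)
    rw [fg] at h2
    simp only [Sum.elim_inl, Sum.elim_inr]
    linarith
  · intro a b hab
    rw [gu a b hab]
    simp
  · intro a
    obtain ⟨k, h1, h2⟩ := hk a
    exact ⟨k, h1, by simp [h2]⟩
  · intro b
    obtain ⟨k, h1, h2⟩ := hk (g b)
    exact ⟨k, h1, by simp [h2]⟩
  · rw [Fintype.sum_sum_type]
    simp only [Sum.elim_inl, Sum.elim_inr]
    have : ∑ b, 2 * ((n0 : ℤ) - 1 - q (g b)) = ∑ a, 2 * ((n0 : ℤ) - 1 - q a) :=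
      Fintype.sum_equiv m.symm _ _ (fun b => rfl)
    rw [this, Finset.sum_neg_distrib]
    ring

end PopMax
end
end

section
/- Suppose |A| = |B| = n0 and M is a popular perfect matching in G, i.e., a perfect matching with Δ(M,N) ≥ 0 for every perfect matching N in G. Then there exists a stable matching S in G* such that S is a perfect matching in G* and S' = M. -/
open Classical

noncomputable section

namespace PopMax

variable {A B : Type*}

section Pot

variable {V : Type*}

def wl (f : V → V → ℤ) : List V → ℤ
  | [] => 0
  | [_] => 0
  | x :: y :: l => f x y + wl f (y :: l)

theorem wl_append (f : V → V → ℤ) (a : V) (l1 l2 : List V) :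
    wl f (l1 ++ a :: l2) = wl f (l1 ++ [a]) + wl f (a :: l2) := by
  induction l1 with
  | nil => simp [wl]
  | cons x t ih =>
    cases t with
    | nil => simp [wl]
    | cons y t => simp only [List.cons_append, wl] at ih ⊢; rw [ih]; ring

theorem wl_le (f : V → V → ℤ) (hf : ∀ x y, f x y ≤ 1) (l : List V) (x : V) :
    wl f (x :: l) ≤ l.length := by
  induction l generalizing x with
  | nil => simp [wl]
  | cons y l ih =>
    have := ih y
    have := hf x y
    simp only [wl, List.length_cons]; push_cast; linarith

theorem wl_eq_sum (f : V → V → ℤ) (d : V) (l : List V) (x : V) :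
    wl f (x :: l) = ∑ i ∈ Finset.range l.length,
      f ((x :: l).getD i d) ((x :: l).getD (i + 1) d) := by
  induction l generalizing x with
  | nil => simp [wl]
  | cons y l ih =>
    rw [List.length_cons, Finset.sum_range_succ']
    simp only [wl, ih y]
    rw [add_comm]; simp

theorem sum_formPerm [Fintype V] [DecidableEq V] (f : V → V → ℤ) (h0 : ∀ x, f x x = 0)
    (l : List V) (x z : V) (hnd : (x :: l).Nodup) (hz : (x :: l).getD l.length x = z) :
    ∑ v, f v ((x :: l).formPerm v) = wl f (x :: l) + f z x := by
  set c := x :: l with hc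
  have h1 : ∑ v, f v (c.formPerm v) = ∑ v ∈ c.toFinset, f v (c.formPerm v) := by
    symm
    apply Finset.sum_subset (Finset.subset_univ _)
    intro v _ hv
    rw [List.formPerm_apply_of_notMem (by simpa using hv), h0]
  have h2 : ∑ v ∈ c.toFinset, f v (c.formPerm v)
      = ∑ i ∈ Finset.range c.length, f (c.getD i x) (c.formPerm (c.getD i x)) := by
    symm
    apply Finset.sum_bij (fun i _ => c.getD i x)
    · intro i hi
      have hi' := Finset.mem_range.1 hi
      rw [List.getD_eq_getElem _ _ hi']; simp
    · intro i hi j hj hij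
      have hi' := Finset.mem_range.1 hi
      have hj' := Finset.mem_range.1 hj
      rw [List.getD_eq_getElem _ _ hi', List.getD_eq_getElem _ _ hj'] at hij
      exact (List.Nodup.getElem_inj_iff hnd).1 hij
    · intro v hv
      obtain ⟨i, hi, rfl⟩ := List.getElem_of_mem (List.mem_toFinset.1 hv)
      exact ⟨i, Finset.mem_range.2 hi, List.getD_eq_getElem _ _ hi⟩
    · intro i hi; rfl
  rw [h1, h2, wl_eq_sum f x l x, ← hc]
  have hl : c.length = l.length + 1 := by simp [hc]
  rw [hl, Finset.sum_range_succ, hz]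
  congr 1
  · apply Finset.sum_congr rfl
    intro i hi
    have hi' := Finset.mem_range.1 hi
    congr 1
    rw [List.getD_eq_getElem c x (by omega : i < c.length), List.formPerm_apply_getElem _ hnd,
      List.getD_eq_getElem c x (by omega : i + 1 < c.length)]
    congr 1
    exact Nat.mod_eq_of_lt (by omega)
  · congr 1
    rw [← hz, List.getD_eq_getElem c x (by omega : l.length < c.length),
      List.formPerm_apply_getElem _ hnd]
    simp [hc]

theorem formPerm_rel [DecidableEq V] (R : V → V → Prop) (h0 : ∀ x, R x x)
    (l : List V) (x z : V) (hnd : (x :: l).Nodup) (hz : (x :: l).getD l.length x = z)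
    (hch : (x :: l).IsChain R) (hzx : R z x) (v : V) : R v ((x :: l).formPerm v) := by
  by_cases hv : v ∈ x :: l
  · obtain ⟨i, hi, rfl⟩ := List.getElem_of_mem hv
    rw [List.formPerm_apply_getElem _ hnd]
    simp only [List.length_cons] at hi
    rcases Nat.lt_or_ge i l.length with h | h
    · have : (i + 1) % (x :: l).length = i + 1 := Nat.mod_eq_of_lt (by simp; omega)
      simp only [this]
      exact List.isChain_iff_getElem.1 hch i (by simp; omega)
    · have : i = l.length := by omega
      subst this
      rw [List.getD_eq_getElem _ x (by simp : l.length < (x :: l).length)] at hz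
      rw [hz]
      simpa using hzx
  · rw [List.formPerm_apply_of_notMem hv]; exact h0 v

/-- potentials -/
theorem exists_potential [Fintype V] [DecidableEq V] (R : V → V → Prop) (f : V → V → ℤ)
    (hR : ∀ x, R x x) (h0 : ∀ x, f x x = 0) (h1 : ∀ x y, f x y ≤ 1)
    (hperm : ∀ σ : Equiv.Perm V, (∀ v, R v (σ v)) → ∑ v, f v (σ v) ≤ 0) :
    ∃ h : V → ℕ, (∀ v, h v < Fintype.card V) ∧
      ∀ x y, R x y → (h y : ℤ) + f x y ≤ h x := by
  let P : V → ℕ → Prop := fun a k => ∃ l : List V, (a :: l).Nodup ∧ (a :: l).IsChain R ∧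
    (k : ℤ) ≤ wl f (a :: l)
  have hP0 : ∀ a, P a 0 := fun a => ⟨[], by simp, by simp, by simp [wl]⟩
  have hPb : ∀ a k, P a k → k < Fintype.card V := by
    rintro a k ⟨l, hnd, -, hk⟩
    have := wl_le f h1 l a
    have h2 := hnd.length_le_card
    simp at h2
    omega
  let h : V → ℕ := fun a => Nat.findGreatest (P a) (Fintype.card V)
  have hP : ∀ a, P a (h a) := fun a => Nat.findGreatest_spec (P := P a) (Nat.zero_le _) (hP0 a)
  have hmax : ∀ a k, P a k → k ≤ h a := fun a k hk =>
    Nat.le_findGreatest (hPb a k hk).le hk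
  refine ⟨h, fun v => hPb _ _ (hP v), fun x y hxy => ?_⟩
  by_cases hne : x = y
  · subst hne; simp [h0]
  rcases lt_or_ge ((h y : ℤ) + f x y) 0 with hneg | hpos
  · omega
  obtain ⟨k, hk⟩ := Int.eq_ofNat_of_zero_le hpos
  suffices P x k by have := hmax x k this; omega
  obtain ⟨l, hnd, hch, hw⟩ := hP y
  by_cases hx : x ∈ y :: l
  · obtain ⟨l1, l2, hl⟩ := List.append_of_mem hx
    rw [hl] at hnd hch hw
    refine ⟨l2, ?_, ?_, ?_⟩
    · exact (List.nodup_append.1 hnd).2.1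
    · exact (List.isChain_append.1 hch).2.1
    · cases l1 with
      | nil => simp at hl; exact absurd hl.1.symm hne
      | cons y' t =>
        have hy : y = y' := by simp at hl; exact hl.1
        subst hy
        rw [wl_append] at hw
        have e : y :: t ++ x :: l2 = (y :: (t ++ [x])) ++ l2 := by simp
        rw [e] at hnd hch
        have hnd' := (List.nodup_append.1 hnd).1
        have hch' := (List.isChain_append.1 hch).1
        have hz : (y :: (t ++ [x])).getD (t ++ [x]).length y = x := by
          simp
        have hs := sum_formPerm f h0 (t ++ [x]) y x hnd' hz
        have hp := hperm _ (formPerm_rel R hR (t ++ [x]) y x hnd' hz hch' hxy)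
        rw [hs] at hp
        simp only [List.cons_append] at hw
        omega
  · refine ⟨y :: l, List.nodup_cons.2 ⟨hx, hnd⟩, List.isChain_cons_cons.2 ⟨hxy, hch⟩, ?_⟩
    simp only [wl]; omega

end Pot

/-- the half weight -/
def hw (I : PrefSys A B) (m : A ≃ B) (x y : A) : ℤ :=
  if I.prefA y (m x) (m y) ∧ I.prefB (m x) y x then 1
  else if I.prefA y (m y) (m x) ∧ I.prefB (m x) x y then -1 else 0

theorem hw_perm [Fintype A] [Fintype B] (I : PrefSys A B) (hI : I.IsValid)
    (M : Finset (A × B)) (m : A ≃ B) (hm : ∀ a b, (a, b) ∈ M ↔ b = m a)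
    (hE : ∀ a, I.E a (m a))
    (hpop : ∀ N : Finset (A × B), IsPerfectMatching I N → 0 ≤ Delta I M N)
    (σ : Equiv.Perm A) (hσ : ∀ v, I.E (σ v) (m v)) : ∑ v, hw I m v (σ v) ≤ 0 := by
  obtain ⟨iA, tA, cA, iB, tB, cB⟩ := hI
  let N : Finset (A × B) := Finset.univ.filter (fun p => p.1 = σ (m.symm p.2))
  have hN : ∀ a b, (a, b) ∈ N ↔ a = σ (m.symm b) := by intro a b; simp [N]
  have hNp : IsPerfectMatching I N := by
    refine ⟨⟨?_, ?_, ?_⟩, ?_, ?_⟩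
    · rintro ⟨a, b⟩ h
      rw [hN] at h; subst h
      simpa using hσ (m.symm b)
    · rintro ⟨a, b⟩ h ⟨a', b'⟩ h' e
      rw [hN] at h h'
      simp only at e; subst e; subst h
      simpa using h'
    · rintro ⟨a, b⟩ h ⟨a', b'⟩ h' e
      rw [hN] at h h'
      simp only at e; subst e; rw [h, h']
    · intro a; exact ⟨m (σ.symm a), by rw [hN]; simp⟩
    · intro b; exact ⟨σ (m.symm b), by rw [hN]⟩
  have hD := hpop N hNp
  have a1 : ∀ x, prefersA I (σ x) M N ↔ I.prefA (σ x) (m (σ x)) (m x) := by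
    intro x
    constructor
    · rintro ⟨b, hb, h | ⟨b', hb', h⟩⟩
      · exact absurd (hNp.2.1 _) h
      · rw [hm] at hb; rw [hN] at hb'
        have : b' = m x := by
          have := σ.injective hb'; rw [this]; simp
        rwa [hb, this] at h
    · intro h
      exact ⟨m (σ x), (hm _ _).2 rfl, Or.inr ⟨m x, (hN _ _).2 (by simp), h⟩⟩
  have a2 : ∀ x, prefersA I (σ x) N M ↔ I.prefA (σ x) (m x) (m (σ x)) := by
    intro x
    constructor
    · rintro ⟨b', hb', h | ⟨b, hb, h⟩⟩
      · exact absurd ⟨_, (hm _ _).2 rfl⟩ h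
      · rw [hm] at hb; rw [hN] at hb'
        have : b' = m x := by
          have := σ.injective hb'; rw [this]; simp
        rwa [hb, this] at h
    · intro h
      exact ⟨m x, (hN _ _).2 (by simp), Or.inr ⟨m (σ x), (hm _ _).2 rfl, h⟩⟩
  have b1 : ∀ x, prefersB I (m x) M N ↔ I.prefB (m x) x (σ x) := by
    intro x
    constructor
    · rintro ⟨b, hb, h | ⟨b', hb', h⟩⟩
      · exact absurd (hNp.2.2 _) h
      · rw [hm] at hb; rw [hN] at hb'
        have := m.injective hb
        subst this
        simpa [hb'] using h
    · intro h
      exact ⟨x, (hm _ _).2 rfl, Or.inr ⟨σ x, (hN _ _).2 (by simp), h⟩⟩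
  have b2 : ∀ x, prefersB I (m x) N M ↔ I.prefB (m x) (σ x) x := by
    intro x
    constructor
    · rintro ⟨b', hb', h | ⟨b, hb, h⟩⟩
      · exact absurd ⟨x, (hm _ _).2 rfl⟩ h
      · rw [hm] at hb; rw [hN] at hb'
        have := m.injective hb
        subst this
        simpa [hb'] using h
    · intro h
      exact ⟨σ x, (hN _ _).2 (by simp), Or.inr ⟨x, (hm _ _).2 rfl, h⟩⟩
  have hphi : ∀ X Y : Finset (A × B), (phi I X Y : ℤ) =
      ∑ x, ((if prefersA I (σ x) X Y then 1 else 0) + (if prefersB I (m x) X Y then 1 else 0)) := by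
    intro X Y
    unfold phi
    rw [Finset.card_filter, Fintype.sum_sum_type]
    push_cast
    rw [Finset.sum_add_distrib]
    congr 1
    · exact (Equiv.sum_comp σ (fun a => if prefersA I a X Y then (1:ℤ) else 0)).symm
    · exact (Equiv.sum_comp m (fun b => if prefersB I b X Y then (1:ℤ) else 0)).symm
  unfold Delta at hD
  rw [hphi, hphi, ← Finset.sum_sub_distrib] at hD
  simp only [a1, a2, b1, b2] at hD
  have key : ∀ x, ((if I.prefA (σ x) (m (σ x)) (m x) then 1 else 0) +
      (if I.prefB (m x) x (σ x) then 1 else 0) -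
      ((if I.prefA (σ x) (m x) (m (σ x)) then 1 else 0) +
      (if I.prefB (m x) (σ x) x then 1 else 0)) : ℤ) = -2 * hw I m x (σ x) := by
    intro x
    unfold hw
    by_cases hx : σ x = x
    · rw [hx]; simp [iA, iB]
    · have hmx : m (σ x) ≠ m x := fun h => hx (m.injective h)
      have p1 := cA (σ x) _ _ (hE (σ x)) (hσ x) hmx
      have p2 := cB (m x) _ _ (hσ x) (hE x) hx
      have p3 : ¬ (I.prefA (σ x) (m (σ x)) (m x) ∧ I.prefA (σ x) (m x) (m (σ x))) :=
        fun h => iA _ _ (tA _ _ _ _ h.1 h.2)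
      have p4 : ¬ (I.prefB (m x) (σ x) x ∧ I.prefB (m x) x (σ x)) :=
        fun h => iB _ _ (tB _ _ _ _ h.1 h.2)
      by_cases q1 : I.prefA (σ x) (m (σ x)) (m x) <;>
      by_cases q2 : I.prefA (σ x) (m x) (m (σ x)) <;>
      by_cases q3 : I.prefB (m x) (σ x) x <;>
      by_cases q4 : I.prefB (m x) x (σ x) <;> simp_all
  simp only [key] at hD
  rw [← Finset.mul_sum] at hD
  linarith

def starS [Fintype A] [Fintype B] (m : A ≃ B) (h : A → ℕ) : Finset (AStar A × BStar A B) :=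
  Finset.univ.filter (fun p =>
    match p with
    | ((a, i), Sum.inl b) => b = m a ∧ (i : ℕ) = h a
    | ((a, i), Sum.inr (a', j)) => a = a' ∧
        (((i : ℕ) < h a ∧ (j : ℕ) = i) ∨ (h a < (i : ℕ) ∧ (j : ℕ) + 1 = i)))

theorem mem_starS_inl [Fintype A] [Fintype B] (m : A ≃ B) (h : A → ℕ) (a : A) (i) (b : B) :
    ((a, i), (Sum.inl b : BStar A B)) ∈ starS m h ↔ b = m a ∧ (i : ℕ) = h a := by
  simp [starS]

theorem mem_starS_inr [Fintype A] [Fintype B] (m : A ≃ B) (h : A → ℕ) (a : A) (i) (a' : A) (j) :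
    ((a, i), (Sum.inr (a', j) : BStar A B)) ∈ starS m h ↔ a = a' ∧
        (((i : ℕ) < h a ∧ (j : ℕ) = i) ∨ (h a < (i : ℕ) ∧ (j : ℕ) + 1 = i)) := by
  simp [starS]

theorem starS_perfect [Fintype A] [Fintype B] (I : PrefSys A B) (m : A ≃ B) (h : A → ℕ)
    (hE : ∀ a, I.E a (m a)) (hlt : ∀ a, h a < Fintype.card A) :
    IsPerfectMatching (starSys I) (starS m h) := by
  refine ⟨⟨?_, ?_, ?_⟩, ?_, ?_⟩
  · rintro ⟨⟨a, i⟩, b | ⟨a', j⟩⟩ hp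
    · rw [mem_starS_inl] at hp
      simp only [starSys]; rw [hp.1]; exact hE a
    · rw [mem_starS_inr] at hp
      simp only [starSys]; exact ⟨hp.1, by omega⟩
  · rintro ⟨⟨a, i⟩, b | ⟨a', j⟩⟩ hp ⟨⟨a2, i2⟩, b2 | ⟨a2', j2⟩⟩ hq e <;>
    simp only [Prod.mk.injEq] at e <;> obtain ⟨rfl, rfl⟩ := e <;>
    simp only [mem_starS_inl, mem_starS_inr] at hp hq
    · rw [hp.1, hq.1]
    · omega
    · omega
    · obtain ⟨rfl, hp⟩ := hp
      obtain ⟨rfl, hq⟩ := hq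
      have : j = j2 := Fin.ext (by omega)
      rw [this]
  · rintro ⟨⟨a, i⟩, b | ⟨a', j⟩⟩ hp ⟨⟨a2, i2⟩, b2 | ⟨a2', j2⟩⟩ hq e <;>
    simp only [Sum.inl.injEq, Sum.inr.injEq, Prod.mk.injEq, reduceCtorEq] at e <;>
    simp only [mem_starS_inl, mem_starS_inr] at hp hq
    · subst e
      have : a = a2 := m.injective (hp.1.symm.trans hq.1)
      subst this
      have : i = i2 := Fin.ext (by omega)
      rw [this]
    · obtain ⟨rfl, rfl⟩ := e
      obtain ⟨rfl, hp⟩ := hp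
      obtain ⟨rfl, hq⟩ := hq
      have : i = i2 := Fin.ext (by omega)
      rw [this]
  · rintro ⟨a, i⟩
    have hi := i.2
    have ha := hlt a
    rcases lt_trichotomy (i : ℕ) (h a) with g | g | g
    · exact ⟨Sum.inr (a, ⟨i, by omega⟩), by rw [mem_starS_inr]; exact ⟨rfl, Or.inl ⟨g, rfl⟩⟩⟩
    · exact ⟨Sum.inl (m a), by rw [mem_starS_inl]; exact ⟨rfl, g⟩⟩
    · exact ⟨Sum.inr (a, ⟨i - 1, by omega⟩), by
        rw [mem_starS_inr]; exact ⟨rfl, Or.inr ⟨g, by simp only; omega⟩⟩⟩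
  · rintro (b | ⟨a, j⟩)
    · exact ⟨(m.symm b, ⟨h (m.symm b), hlt _⟩), by rw [mem_starS_inl]; simp⟩
    · have hj := j.2
      have ha := hlt a
      rcases lt_or_ge (j : ℕ) (h a) with g | g
      · exact ⟨(a, ⟨j, by omega⟩), by rw [mem_starS_inr]; exact ⟨rfl, Or.inl ⟨g, rfl⟩⟩⟩
      · exact ⟨(a, ⟨j + 1, by omega⟩), by
          rw [mem_starS_inr]; exact ⟨rfl, Or.inr ⟨by simp only; omega, rfl⟩⟩⟩

theorem starS_stable [Fintype A] [Fintype B] (I : PrefSys A B) (hI : I.IsValid)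
    (m : A ≃ B) (h : A → ℕ)
    (hE : ∀ a, I.E a (m a)) (hlt : ∀ a, h a < Fintype.card A)
    (hh : ∀ x y, I.E y (m x) → (h y : ℤ) + hw I m x y ≤ h x) (ai : AStar A) (w : BStar A B) :
    ¬ Blocks (starSys I) (starS m h) ai w := by
  obtain ⟨-, hpA, hpB⟩ := starS_perfect I m h hE hlt
  obtain ⟨iA, tA, cA, iB, tB, cB⟩ := hI
  rintro ⟨hEe, hnot, hA, hB⟩
  replace hA := hA.resolve_left (not_not.2 (hpA _))
  replace hB := hB.resolve_left (not_not.2 (hpB _))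
  obtain ⟨w', hw', hA⟩ := hA
  obtain ⟨⟨a', i'⟩, hai', hB⟩ := hB
  obtain ⟨a, i⟩ := ai
  rcases w with b | ⟨c, j⟩
  · rw [mem_starS_inl] at hai' hnot
    obtain ⟨rfl, hi'⟩ := hai'
    have hk := hh a' a hEe
    simp only [starSys] at hEe hA hB
    have lower : -1 ≤ hw I m a' a := by unfold hw; split_ifs <;> norm_num
    rcases w' with b' | ⟨c', j'⟩
    · rw [mem_starS_inl] at hw'
      obtain ⟨rfl, hi⟩ := hw'
      simp only at hA
      have nA : ¬ I.prefA a (m a) (m a') := fun g => iA _ _ (tA _ _ _ _ g hA)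
      have : 0 ≤ hw I m a' a := by
        unfold hw; split_ifs with q1 q2
        · norm_num
        · exact absurd q2.1 nA
        · norm_num
      rcases hB with hB | ⟨hB1, hB⟩
      · omega
      · have : hw I m a' a = 1 := by unfold hw; rw [if_pos ⟨hA, hB⟩]
        omega
    · rw [mem_starS_inr] at hw'
      obtain ⟨rfl, hj⟩ := hw'
      simp only at hA
      rcases hB with hB | ⟨hB1, hB⟩
      · omega
      · have nB : ¬ I.prefB (m a') a' a := fun g => iB _ _ (tB _ _ _ _ g hB)
        have : 0 ≤ hw I m a' a := by
          unfold hw; split_ifs with q1 q2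
          · norm_num
          · exact absurd q2.2 nB
          · norm_num
        omega
  · rw [mem_starS_inr] at hai' hnot
    simp only [starSys] at hEe hA hB
    obtain ⟨rfl, hB2, hB3, hB4⟩ := hB
    obtain ⟨-, hai'⟩ := hai'
    subst hB2
    rcases w' with b' | ⟨c', j'⟩
    · rw [mem_starS_inl] at hw'
      simp only at hA
      omega
    · simp only at hA
      omega

/-- If `|A| = |B| = n0` and `M` is a popular perfect matching in `G`,
then there is a stable matching `S` in `G*` that is a perfect matching in `G*` and
satisfies `S' = M`. -/
theorem stmt12 {A B : Type*} [Fintype A] [Fintype B] [DecidableEq A] [DecidableEq B]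
    (I : PrefSys A B) (hI : I.IsValid) (n0 : ℕ)
    (hA : Fintype.card A = n0) (hB : Fintype.card B = n0)
    (M : Finset (A × B)) (hM : IsPerfectMatching I M)
    (hpop : ∀ N : Finset (A × B), IsPerfectMatching I N → 0 ≤ Delta I M N) :
    ∃ S : Finset (AStar A × BStar A B),
      IsStable (starSys I) S ∧ IsPerfectMatching (starSys I) S ∧ proj S = M := by
  have hM' := hM
  obtain ⟨⟨hME, hM1, hM2⟩, hMA, hMB⟩ := hM'
  choose f hf using hMA
  have hbij : Function.Bijective f := by
    constructor
    · intro a a' e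
      exact congrArg Prod.fst (hM2 _ (hf a) _ (hf a') e)
    · intro b
      obtain ⟨a, ha⟩ := hMB b
      exact ⟨a, congrArg Prod.snd (hM1 _ (hf a) _ ha rfl)⟩
  let m : A ≃ B := Equiv.ofBijective f hbij
  have hm : ∀ a b, (a, b) ∈ M ↔ b = m a := by
    intro a b
    constructor
    · intro h; exact congrArg Prod.snd (hM1 _ h _ (hf a) rfl)
    · rintro rfl; exact hf a
  have hE : ∀ a, I.E a (m a) := fun a => hME _ (hf a)
  obtain ⟨h, hlt, hh⟩ := exists_potential (fun x y => I.E y (m x)) (hw I m) hE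
    (by intro x; simp [hw, hI.1]) (by intro x y; unfold hw; split_ifs <;> norm_num)
    (hw_perm I hI M m hm hE hpop)
  have hp := starS_perfect I m h hE hlt
  refine ⟨starS m h, ⟨hp.1, starS_stable I hI m h hE hlt hh⟩, hp, ?_⟩
  ext ⟨a, b⟩
  rw [hm]
  simp only [proj, Finset.mem_filter, Finset.mem_univ, true_and, mem_starS_inl]
  constructor
  · rintro ⟨_, h, _⟩; exact h
  · intro e; exact ⟨⟨h a, hlt a⟩, e, rfl⟩

end PopMax
end
end
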